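/- arXiv:2011.14609 — 3 statements merged into one kernel-verified Lean document; each statement's English description precedes it below -/
import Mathlib

section
/- Let m and n be positive integers with n ≥ 4 even, let 0 ≤ ℓ ≤ n/2 be an integer of the same parity as m, let Γ = HTG(m,n,ℓ), and assume Γ is a normal Cayley graph of the associated generalized dihedral group G. Then Aut(Γ) acts regularly on the vertex set of Γ if and only if none of the conditions (c1), (c2), (c3) and (c4) holds. -/
namespace HTGPaper

/-- The honeycomb toroidal graph `HTG(m,n,ℓ)`. -/
def HTG (m n ℓ : ℕ) : SimpleGraph (ZMod m × ZMod n) :=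
  SimpleGraph.fromRel (fun v w =>
    (v.1 = w.1 ∧ (w.2 = v.2 + 1 ∨ w.2 = v.2 - 1)) ∨
    (v.1.val ≠ m - 1 ∧ w.1 = v.1 + 1 ∧ w.2 = v.2 ∧ v.1.val % 2 ≠ v.2.val % 2) ∨
    (v.1.val = m - 1 ∧ w.1 = 0 ∧ w.2 = v.2 + (ℓ : ZMod n) ∧ v.2.val % 2 = m % 2))

/-- Generators of the generalized dihedral group `G`. -/
inductive Gen | t | x | y

/-- Relators of the presentation of `G`. -/
def rels (m n ℓ : ℕ) : Set (FreeGroup Gen) :=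
  {FreeGroup.of Gen.t ^ 2,
   FreeGroup.of Gen.x ^ (n / 2),
   FreeGroup.of Gen.y ^ m * (FreeGroup.of Gen.x ^ ((ℓ + m) / 2))⁻¹,
   FreeGroup.of Gen.t * FreeGroup.of Gen.x * (FreeGroup.of Gen.t)⁻¹ * FreeGroup.of Gen.x,
   FreeGroup.of Gen.t * FreeGroup.of Gen.y * (FreeGroup.of Gen.t)⁻¹ * FreeGroup.of Gen.y,
   FreeGroup.of Gen.x * FreeGroup.of Gen.y * (FreeGroup.of Gen.x)⁻¹ * (FreeGroup.of Gen.y)⁻¹}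

/-- The group `G = ⟨t,x,y | t², x^{n/2}, y^m x^{-(ℓ+m)/2}, txt⁻¹x, tyt⁻¹y, [x,y]⟩`. -/
abbrev G (m n ℓ : ℕ) : Type := PresentedGroup (rels m n ℓ)

def gent (m n ℓ : ℕ) : G m n ℓ := PresentedGroup.of Gen.t
def genx (m n ℓ : ℕ) : G m n ℓ := PresentedGroup.of Gen.x
def geny (m n ℓ : ℕ) : G m n ℓ := PresentedGroup.of Gen.y

/-- The connection set `{t, tx, ty}`. -/
def S (m n ℓ : ℕ) : Set (G m n ℓ) :=
  {gent m n ℓ, gent m n ℓ * genx m n ℓ, gent m n ℓ * geny m n ℓ}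

/-- The Cayley graph of a group with respect to a subset. -/
def cayley (H : Type*) [Group H] (T : Set H) : SimpleGraph H :=
  SimpleGraph.fromRel (fun g h => ∃ s ∈ T, h = g * s)

/-- The Cayley graph of an additive group with respect to a subset. -/
def addCayley (H : Type*) [AddGroup H] (T : Set H) : SimpleGraph H :=
  SimpleGraph.fromRel (fun g h => ∃ s ∈ T, h = g + s)

/-- `Cay(H;T)` is a normal Cayley graph of `H` if the left regular representation `H_L`
is a normal subgroup of the automorphism group, i.e. every conjugate of a left
translation by a graph automorphism is again a left translation. -/
def IsNormalCayley (H : Type*) [Group H] (T : Set H) : Prop :=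
  ∀ (f : cayley H T ≃g cayley H T) (a : H), ∃ b : H,
    ∀ g : H, f (a * f.symm g) = b * g

/-- An `s`-arc of a graph: `s+1` vertices, consecutive ones adjacent, and any three
consecutive vertices pairwise distinct. -/
def IsSArc {V : Type*} (Γ : SimpleGraph V) (s : ℕ) (p : Fin (s + 1) → V) : Prop :=
  (∀ i : Fin s, Γ.Adj (p i.castSucc) (p i.succ)) ∧
  ∀ i j : Fin (s + 1), (i : ℕ) + 2 = (j : ℕ) → p i ≠ p j

/-- A graph is `s`-arc-transitive if its automorphism group is transitive on `s`-arcs. -/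
def IsSArcTransitive {V : Type*} (Γ : SimpleGraph V) (s : ℕ) : Prop :=
  ∀ p q : Fin (s + 1) → V, IsSArc Γ s p → IsSArc Γ s q →
    ∃ f : Γ ≃g Γ, ∀ i, f (p i) = q i

/-- A graph is `s`-arc-regular if its automorphism group is regular on `s`-arcs. -/
def IsSArcRegular {V : Type*} (Γ : SimpleGraph V) (s : ℕ) : Prop :=
  ∀ p q : Fin (s + 1) → V, IsSArc Γ s p → IsSArc Γ s q →
    ∃! f : Γ ≃g Γ, ∀ i, f (p i) = q i

/-- A graph is arc-transitive if it is `1`-arc-transitive. -/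
def IsArcTransitive {V : Type*} (Γ : SimpleGraph V) : Prop :=
  IsSArcTransitive Γ 1

/-- The generalized prism `GPr(k)`. -/
def GPr (k : ℕ) : SimpleGraph (ZMod 2 × ZMod (2 * k)) :=
  SimpleGraph.fromRel (fun v w =>
    (v.1 = w.1 ∧ (w.2 = v.2 + 1 ∨ w.2 = v.2 - 1)) ∨
    (Even v.2.val ∧ w.1 = v.1 + 1 ∧ w.2 = v.2 + 1))

/-- The cubic graph on `k` vertices given by LCF-type data `f`. -/
def lcfGraph (k : ℕ) (f : ℕ → ℤ) : SimpleGraph (ZMod k) :=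
  SimpleGraph.fromRel (fun v w => w = v + 1 ∨ w = v + (f v.val : ZMod k))

/-- The cube graph `Q₃`, LCF notation `[3,-3]⁴`. -/
def cubeGraph : SimpleGraph (ZMod 8) :=
  lcfGraph 8 (fun i => if i % 2 = 0 then 3 else -3)

/-- The Heawood graph, LCF notation `[5,-5]⁷`. -/
def heawood : SimpleGraph (ZMod 14) :=
  lcfGraph 14 (fun i => if i % 2 = 0 then 5 else -5)

/-- The Möbius–Kantor graph, LCF notation `[5,-5]⁸`. -/
def mobiusKantor : SimpleGraph (ZMod 16) :=
  lcfGraph 16 (fun i => if i % 2 = 0 then 5 else -5)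

/-- The Pappus graph, LCF notation `[5,7,-7,7,-7,-5]³`. -/
def pappus : SimpleGraph (ZMod 18) :=
  lcfGraph 18 (fun i =>
    match i % 6 with
    | 0 => 5 | 1 => 7 | 2 => -7 | 3 => 7 | 4 => -7 | _ => -5)

/-- The red edges of `HTG(m,n,ℓ) = Cay(G;{t,tx,ty})`. -/
def Red (m n ℓ : ℕ) : Set (Sym2 (G m n ℓ)) :=
  {e | ∃ g : G m n ℓ, e = s(g, g * gent m n ℓ)}

/-- The blue edges. -/
def Blue (m n ℓ : ℕ) : Set (Sym2 (G m n ℓ)) :=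
  {e | ∃ g : G m n ℓ, e = s(g, g * (gent m n ℓ * genx m n ℓ))}

/-- The green edges. -/
def Green (m n ℓ : ℕ) : Set (Sym2 (G m n ℓ)) :=
  {e | ∃ g : G m n ℓ, e = s(g, g * (gent m n ℓ * geny m n ℓ))}

/-- The three color classes. -/
def colorClasses (m n ℓ : ℕ) : Set (Set (Sym2 (G m n ℓ))) :=
  {Red m n ℓ, Blue m n ℓ, Green m n ℓ}

/-- An automorphism of `Cay(G;{t,tx,ty})` is color permuting if it preserves the
partition of the edges into the three color classes. -/
def IsColorPermuting {m n ℓ : ℕ}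
    (f : cayley (G m n ℓ) (S m n ℓ) ≃g cayley (G m n ℓ) (S m n ℓ)) : Prop :=
  ∀ C ∈ colorClasses m n ℓ, Sym2.map ⇑f '' C ∈ colorClasses m n ℓ

/-- The group `Aut(H;T)` of automorphisms of `H` fixing `T` setwise. -/
def autFixing (H : Type*) [Group H] (T : Set H) : Subgroup (MulAut H) where
  carrier := {φ | ⇑φ '' T = T}
  one_mem' := by
    show ⇑(1 : MulAut H) '' T = T
    simp
  mul_mem' := by
    intro a b ha hb
    show ⇑(a * b) '' T = T
    have h : ⇑(a * b) = ⇑a ∘ ⇑b := rfl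
    rw [h, Set.image_comp]
    rw [show ⇑b '' T = T from hb, show ⇑a '' T = T from ha]
  inv_mem' := by
    intro a ha
    show ⇑a⁻¹ '' T = T
    conv_lhs => rw [← show ⇑a '' T = T from ha]
    rw [← Set.image_comp]
    have h : ⇑a⁻¹ ∘ ⇑a = id := by
      funext g
      simp
    rw [h, Set.image_id]


/-- Condition (c1): `gcd(n, ℓ+m) = 2m` and `2mn ∣ ℓ² + 2mℓ - 3m²`. -/
def C1 (m n ℓ : ℕ) : Prop :=
  Int.gcd (n : ℤ) ((ℓ : ℤ) + m) = 2 * m ∧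
    (2 * m * n : ℤ) ∣ ((ℓ : ℤ) ^ 2 + 2 * m * ℓ - 3 * m ^ 2)

/-- Condition (c2): `gcd(n, ℓ-m) = 2m` and `2mn ∣ ℓ² - 2mℓ - 3m²`. -/
def C2 (m n ℓ : ℕ) : Prop :=
  Int.gcd (n : ℤ) ((ℓ : ℤ) - m) = 2 * m ∧
    (2 * m * n : ℤ) ∣ ((ℓ : ℤ) ^ 2 - 2 * m * ℓ - 3 * m ^ 2)

/-- Condition (c3): `ℓ ∈ {0, n/2}`. -/
def C3 (m n ℓ : ℕ) : Prop := ℓ = 0 ∨ 2 * ℓ = n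

/-- Condition (c4): `gcd(n, ℓ+m) = 2m = gcd(n, ℓ-m)` and `2mn ∣ ℓ² + 3m²`. -/
def C4 (m n ℓ : ℕ) : Prop :=
  Int.gcd (n : ℤ) ((ℓ : ℤ) + m) = 2 * m ∧ Int.gcd (n : ℤ) ((ℓ : ℤ) - m) = 2 * m ∧
    (2 * m * n : ℤ) ∣ ((ℓ : ℤ) ^ 2 + 3 * m ^ 2)

/-!
`Γ` is the quotient of the hexagonal tessellation of the plane by a lattice `L` of periods, on which
`G` acts by translations and half-turns; this identifies `Γ` with `Cay(G; {t, tx, ty})`. Normality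
makes the stabilizer of the identity in `Aut(Γ)` the group of automorphisms of `G` that preserve
`{t, tx, ty}`, and since `t, tx, ty` generate `G`, such an automorphism is determined by the
permutation it induces on them.

The generators are half-turns attached to the points `(0, 0)`, `(1, 0)` and `(0, 1)`, and a
permutation of them extends to `G` exactly when the linear part of the affine map that permutes
these three points preserves `L`. A nontrivial subgroup of `S₃` contains a transposition or the
3-cycle: (c1), (c3) and (c2) say that `L` is invariant under the three reflections, and (c4) that it
is invariant under the rotation of order 3.
-/

/-- The automorphism group of `Γ` acts regularly on the vertices of `Γ`. -/
def AutActsRegularly {V : Type*} (Γ : SimpleGraph V) : Prop :=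
  ∀ u v : V, ∃! f : Γ ≃g Γ, f u = v

theorem AutActsRegularly.of_iso {V W : Type*} {Γ : SimpleGraph V} {Δ : SimpleGraph W}
    (e : Γ ≃g Δ) (h : AutActsRegularly Γ) : AutActsRegularly Δ := by
  intro u v
  obtain ⟨f, hf, hunique⟩ := h (e.symm u) (e.symm v)
  refine ⟨(e.symm.trans f).trans e, by simp [hf], fun g hg ↦ ?_⟩
  have hconj : (e.trans g).trans e.symm = f := hunique _ (by simp [hg])
  ext w
  simp [← hconj]

theorem autActsRegularly_congr {V W : Type*} {Γ : SimpleGraph V} {Δ : SimpleGraph W}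
    (e : Γ ≃g Δ) : AutActsRegularly Γ ↔ AutActsRegularly Δ :=
  ⟨.of_iso e, .of_iso e.symm⟩

section Cayley

variable {H : Type*} [Group H] {T : Set H}

theorem cayley_adj {g h : H} :
    (cayley H T).Adj g h ↔ g ≠ h ∧ (g⁻¹ * h ∈ T ∨ h⁻¹ * g ∈ T) := by
  simp only [cayley, SimpleGraph.fromRel_adj, ← inv_mul_eq_iff_eq_mul, exists_eq_right']

theorem cayley_adj_iff_inv_mul_mem (hone : 1 ∉ T) (hinv : ∀ s ∈ T, s⁻¹ ∈ T) {g h : H} :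
    (cayley H T).Adj g h ↔ g⁻¹ * h ∈ T := by
  rw [cayley_adj]
  constructor
  · rintro ⟨-, hgh | hhg⟩
    · exact hgh
    · simpa using hinv _ hhg
  · exact fun hgh ↦ ⟨fun heq ↦ hone (by simpa [heq] using hgh), .inl hgh⟩

variable (T) in
/-- Left multiplication by `a` as an automorphism of a Cayley graph. -/
def leftTranslation (a : H) : cayley H T ≃g cayley H T where
  toEquiv := Equiv.mulLeft a
  map_rel_iff' := by simp [cayley_adj, mul_assoc]

@[simp]
theorem leftTranslation_apply (a g : H) : leftTranslation T a g = a * g := rfl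

theorem mem_autFixing {φ : MulAut H} : φ ∈ autFixing H T ↔ φ '' T = T := Iff.rfl

theorem autFixing.apply_mem_iff {φ : MulAut H} (hφ : φ ∈ autFixing H T) {g : H} :
    φ g ∈ T ↔ g ∈ T := by
  conv_lhs => rw [← mem_autFixing.mp hφ]
  exact φ.injective.mem_set_image

/-- A group automorphism preserving the connection set, as a graph automorphism. -/
def autFixing.toIso {φ : MulAut H} (hφ : φ ∈ autFixing H T) : cayley H T ≃g cayley H T where
  toEquiv := φ.toEquiv
  map_rel_iff' {g h} := by
    simp [cayley_adj, ← map_inv, ← map_mul, apply_mem_iff hφ]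

theorem autActsRegularly_cayley_iff :
    AutActsRegularly (cayley H T) ↔ ∀ f : cayley H T ≃g cayley H T, f 1 = 1 → ∀ g, f g = g := by
  constructor
  · intro h f hf g
    rw [(h 1 1).unique hf (y₂ := RelIso.refl _) rfl, RelIso.refl_apply]
  · intro h u v
    refine ⟨leftTranslation T (v * u⁻¹), by simp, fun f hf ↦ RelIso.ext fun g ↦ ?_⟩
    have hfix := h (((leftTranslation T u).trans f).trans (leftTranslation T v⁻¹))
      (by simp [hf]) (u⁻¹ * g)
    simp only [RelIso.trans_apply, leftTranslation_apply, mul_inv_cancel_left,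
      inv_mul_eq_iff_eq_mul] at hfix
    simp [hfix, mul_assoc]

theorem IsNormalCayley.map_mul (hnorm : IsNormalCayley H T) {f : cayley H T ≃g cayley H T}
    (hf : f 1 = 1) (g h : H) : f (g * h) = f g * f h := by
  obtain ⟨b, hb⟩ := hnorm f g
  have hb' (k : H) : f (g * k) = b * f k := by simpa using hb (f k)
  have hfg : f g = b := by simpa [hf] using hb' 1
  rw [hb', hfg]

theorem IsNormalCayley.exists_mem_autFixing (hnorm : IsNormalCayley H T) (hone : 1 ∉ T)
    (hinv : ∀ s ∈ T, s⁻¹ ∈ T) {f : cayley H T ≃g cayley H T} (hf : f 1 = 1) :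
    ∃ φ ∈ autFixing H T, ∀ g, φ g = f g := by
  refine ⟨MulEquiv.mk' f.toEquiv (hnorm.map_mul hf), ?_, fun _ ↦ rfl⟩
  have hmem (g : H) : f g ∈ T ↔ g ∈ T := by
    simpa [cayley_adj_iff_inv_mul_mem hone hinv, hf] using f.map_adj_iff (v := 1) (w := g)
  refine mem_autFixing.mpr (Set.Subset.antisymm ?_ fun s hs ↦ ?_)
  · rintro _ ⟨s, hs, rfl⟩
    exact (hmem s).mpr hs
  · exact ⟨f.symm s, (hmem _).mp (by simpa using hs), f.apply_symm_apply s⟩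

theorem IsNormalCayley.autActsRegularly_iff (hnorm : IsNormalCayley H T) (hone : 1 ∉ T)
    (hinv : ∀ s ∈ T, s⁻¹ ∈ T) : AutActsRegularly (cayley H T) ↔ autFixing H T = ⊥ := by
  rw [autActsRegularly_cayley_iff, Subgroup.eq_bot_iff_forall]
  constructor
  · intro h φ hφ
    exact MulEquiv.ext (h (autFixing.toIso hφ) φ.map_one)
  · intro h f hf g
    obtain ⟨φ, hφ, hφf⟩ := hnorm.exists_mem_autFixing hone hinv hf
    rw [← hφf, h φ hφ, MulAut.one_apply]

end Cayley

section InducedPerms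

variable {H ι : Type*} [Group H]

/-- The group of permutations of the index set of a family `s` of elements of a group that are
induced by automorphisms of the group. -/
def inducedPerms (s : ι → H) : Subgroup (Equiv.Perm ι) where
  carrier := {σ | ∃ φ : MulAut H, ∀ i, φ (s i) = s (σ i)}
  one_mem' := ⟨1, fun _ ↦ rfl⟩
  mul_mem' := by
    rintro σ τ ⟨φ, hφ⟩ ⟨ψ, hψ⟩
    exact ⟨φ * ψ, fun i ↦ by simp [hφ, hψ]⟩
  inv_mem' := by
    rintro σ ⟨φ, hφ⟩
    exact ⟨φ⁻¹, fun i ↦ by simp [MulAut.inv_apply, MulEquiv.symm_apply_eq, hφ]⟩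

variable {s : ι → H}

theorem exists_mulAut_of_exists_hom [Finite ι] (hs : Subgroup.closure (Set.range s) = ⊤)
    {σ : Equiv.Perm ι} {α : H →* H} (hα : ∀ i, α (s i) = s (σ i)) :
    ∃ φ : MulAut H, ∀ g, φ g = α g := by
  obtain ⟨k, hk⟩ : ∃ k, orderOf σ = k + 1 := ⟨_, (Nat.succ_pred (orderOf_pos σ).ne').symm⟩
  let A : Monoid.End H := α
  have hpow (j : ℕ) (i : ι) : (A ^ j) (s i) = s ((σ ^ j) i) := by
    induction j with
    | zero => rfl
    | succ j ih =>
      rw [pow_succ', pow_succ', Equiv.Perm.mul_apply, ← hα, ← ih]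
      rfl
  have hA : A ^ (k + 1) = 1 := by
    refine MonoidHom.eq_of_eqOn_dense hs ?_
    rintro _ ⟨i, rfl⟩
    exact (hpow (k + 1) i).trans (by rw [← hk, pow_orderOf_eq_one]; rfl)
  exact ⟨MonoidHom.toMulEquiv A (A ^ k) ((pow_succ A k).symm.trans hA)
    ((pow_succ' A k).symm.trans hA), fun _ ↦ rfl⟩

theorem mem_inducedPerms_iff_exists_hom [Finite ι] (hs : Subgroup.closure (Set.range s) = ⊤)
    {σ : Equiv.Perm ι} : σ ∈ inducedPerms s ↔ ∃ α : H →* H, ∀ i, α (s i) = s (σ i) := by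
  constructor
  · rintro ⟨φ, hφ⟩
    exact ⟨φ.toMonoidHom, hφ⟩
  · rintro ⟨α, hα⟩
    obtain ⟨φ, hφ⟩ := exists_mulAut_of_exists_hom hs hα
    exact ⟨φ, fun i ↦ by rw [hφ, hα]⟩

theorem mulAut_eq_one_iff (hs : Subgroup.closure (Set.range s) = ⊤) {φ : MulAut H} :
    φ = 1 ↔ ∀ i, φ (s i) = s i := by
  refine ⟨fun h i ↦ by simp [h], fun h ↦ MulEquiv.toMonoidHom_injective ?_⟩
  refine MonoidHom.eq_of_eqOn_dense hs ?_
  rintro _ ⟨i, rfl⟩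
  exact h i

theorem exists_perm_of_mem_autFixing (hinj : Function.Injective s) {φ : MulAut H}
    (hφ : φ ∈ autFixing H (Set.range s)) : ∃ σ : Equiv.Perm ι, ∀ i, φ (s i) = s (σ i) := by
  have hbij : Set.BijOn φ (Set.range s) (Set.range s) :=
    ⟨(Set.mapsTo_iff_image_subset).mpr hφ.le, φ.injective.injOn, hφ.ge⟩
  let e := Equiv.ofInjective s hinj
  refine ⟨(e.trans (hbij.equiv φ)).trans e.symm, fun i ↦ ?_⟩
  exact congrArg Subtype.val (e.apply_symm_apply (hbij.equiv φ (e i))).symm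

theorem autFixing_range_eq_bot_iff (hinj : Function.Injective s)
    (hs : Subgroup.closure (Set.range s) = ⊤) :
    autFixing H (Set.range s) = ⊥ ↔ inducedPerms s = ⊥ := by
  simp only [Subgroup.eq_bot_iff_forall]
  constructor
  · rintro h σ ⟨φ, hφ⟩
    have hone : φ = 1 := h φ <| by
      rw [mem_autFixing, ← Set.range_comp, show φ ∘ s = s ∘ σ from funext hφ,
        σ.surjective.range_comp]
    exact Equiv.ext fun i ↦ hinj (by rw [← hφ, hone]; rfl)
  · intro h φ hφ
    obtain ⟨σ, hσ⟩ := exists_perm_of_mem_autFixing hinj hφ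
    rw [mulAut_eq_one_iff hs]
    intro i
    rw [hσ, h σ ⟨φ, hσ⟩, Equiv.Perm.one_apply]

theorem swap_mem_inducedPerms_of_eq [DecidableEq ι] {i j : ι} (h : s i = s j) :
    Equiv.swap i j ∈ inducedPerms s :=
  ⟨1, fun k ↦ by rw [MulAut.one_apply, Equiv.swap_apply_def]; split_ifs <;> simp_all⟩

theorem injective_of_inducedPerms_eq_bot (h : inducedPerms s = ⊥) : Function.Injective s := by
  classical
  intro i j hij
  have hswap := swap_mem_inducedPerms_of_eq hij
  rwa [h, Subgroup.mem_bot, Equiv.swap_eq_one_iff] at hswap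

theorem subgroup_perm_fin_three_eq_bot_iff (P : Subgroup (Equiv.Perm (Fin 3))) :
    P = ⊥ ↔ Equiv.swap 1 2 ∉ P ∧ Equiv.swap 0 2 ∉ P ∧ Equiv.swap 0 1 ∉ P ∧ finRotate 3 ∉ P := by
  constructor
  · rintro rfl
    simp only [Subgroup.mem_bot]
    decide
  · rintro ⟨h12, h02, h01, hrot⟩
    refine (Subgroup.eq_bot_iff_forall P).mpr fun σ hσ ↦ ?_
    have hcases : ∀ τ : Equiv.Perm (Fin 3), τ = 1 ∨ τ = Equiv.swap 1 2 ∨ τ = Equiv.swap 0 2 ∨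
        τ = Equiv.swap 0 1 ∨ τ = finRotate 3 ∨ τ⁻¹ = finRotate 3 := by decide
    rcases hcases σ with h | h | h | h | h | h
    · exact h
    · exact absurd (h ▸ hσ) h12
    · exact absurd (h ▸ hσ) h02
    · exact absurd (h ▸ hσ) h01
    · exact absurd (h ▸ hσ) hrot
    · exact absurd (h ▸ P.inv_mem hσ) hrot

end InducedPerms

section Group

variable {m n ℓ : ℕ}

theorem gent_mul_self : gent m n ℓ * gent m n ℓ = 1 := by
  rw [← pow_two]
  exact PresentedGroup.one_of_mem (x := FreeGroup.of Gen.t ^ 2) (by simp [rels])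

theorem genx_pow : genx m n ℓ ^ (n / 2) = 1 :=
  PresentedGroup.one_of_mem (x := FreeGroup.of Gen.x ^ (n / 2)) (by simp [rels])

theorem geny_pow : geny m n ℓ ^ m = genx m n ℓ ^ ((ℓ + m) / 2) :=
  mul_inv_eq_one.mp <| PresentedGroup.one_of_mem
    (x := FreeGroup.of Gen.y ^ m * (FreeGroup.of Gen.x ^ ((ℓ + m) / 2))⁻¹) (by simp [rels])

theorem inv_gent : (gent m n ℓ)⁻¹ = gent m n ℓ :=
  inv_eq_of_mul_eq_one_left gent_mul_self

theorem gent_mul_genx_mul_gent : gent m n ℓ * genx m n ℓ * gent m n ℓ = (genx m n ℓ)⁻¹ := by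
  have h : gent m n ℓ * genx m n ℓ * (gent m n ℓ)⁻¹ * genx m n ℓ = 1 :=
    PresentedGroup.one_of_mem (x := FreeGroup.of Gen.t * FreeGroup.of Gen.x *
      (FreeGroup.of Gen.t)⁻¹ * FreeGroup.of Gen.x) (by simp [rels])
  rw [inv_gent] at h
  exact eq_inv_of_mul_eq_one_left h

theorem gent_mul_geny_mul_gent : gent m n ℓ * geny m n ℓ * gent m n ℓ = (geny m n ℓ)⁻¹ := by
  have h : gent m n ℓ * geny m n ℓ * (gent m n ℓ)⁻¹ * geny m n ℓ = 1 :=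
    PresentedGroup.one_of_mem (x := FreeGroup.of Gen.t * FreeGroup.of Gen.y *
      (FreeGroup.of Gen.t)⁻¹ * FreeGroup.of Gen.y) (by simp [rels])
  rw [inv_gent] at h
  exact eq_inv_of_mul_eq_one_left h

theorem commute_genx_geny : Commute (genx m n ℓ) (geny m n ℓ) := by
  have h : genx m n ℓ * geny m n ℓ * (genx m n ℓ)⁻¹ * (geny m n ℓ)⁻¹ = 1 :=
    PresentedGroup.one_of_mem (x := FreeGroup.of Gen.x * FreeGroup.of Gen.y *
      (FreeGroup.of Gen.x)⁻¹ * (FreeGroup.of Gen.y)⁻¹) (by simp [rels])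
  exact commutatorElement_eq_one_iff_commute.mp h

/-- The element `x ^ a * y ^ b` of `G`, attached to the vector `(a, b)`. -/
def translation (m n ℓ : ℕ) (v : ℤ × ℤ) : G m n ℓ := genx m n ℓ ^ v.1 * geny m n ℓ ^ v.2

/-- The element `t * x ^ a * y ^ b` of `G`, attached to the vector `(a, b)`. -/
def halfTurn (m n ℓ : ℕ) (v : ℤ × ℤ) : G m n ℓ := gent m n ℓ * translation m n ℓ v

theorem translation_zero : translation m n ℓ 0 = 1 := by simp [translation]

theorem translation_add (u v : ℤ × ℤ) :
    translation m n ℓ (u + v) = translation m n ℓ u * translation m n ℓ v := by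
  simp only [translation, Prod.fst_add, Prod.snd_add, zpow_add]
  exact (commute_genx_geny.zpow_zpow v.1 u.2).mul_mul_mul_comm _ _

theorem translation_neg (v : ℤ × ℤ) : translation m n ℓ (-v) = (translation m n ℓ v)⁻¹ :=
  eq_inv_of_mul_eq_one_left (by rw [← translation_add, neg_add_cancel, translation_zero])

theorem translation_nsmul (k : ℕ) (v : ℤ × ℤ) :
    translation m n ℓ (k • v) = translation m n ℓ v ^ k := by
  induction k with
  | zero => rw [zero_smul, pow_zero, translation_zero]
  | succ k ih => rw [succ_nsmul, translation_add, ih, pow_succ]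

theorem translation_mul_gent (v : ℤ × ℤ) :
    translation m n ℓ v * gent m n ℓ = gent m n ℓ * translation m n ℓ (-v) := by
  have hconj : MulAut.conj (gent m n ℓ) (translation m n ℓ v) = translation m n ℓ (-v) := by
    simp only [translation, map_mul, map_zpow, MulAut.conj_apply, inv_gent,
      gent_mul_genx_mul_gent, gent_mul_geny_mul_gent, Prod.fst_neg, Prod.snd_neg, inv_zpow,
      zpow_neg]
  rw [← hconj, MulAut.conj_apply, inv_gent, ← mul_assoc, ← mul_assoc, gent_mul_self, one_mul]

theorem halfTurn_mul_translation (u v : ℤ × ℤ) :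
    halfTurn m n ℓ u * translation m n ℓ v = halfTurn m n ℓ (u + v) := by
  rw [halfTurn, halfTurn, mul_assoc, translation_add]

theorem translation_mul_halfTurn (u v : ℤ × ℤ) :
    translation m n ℓ u * halfTurn m n ℓ v = halfTurn m n ℓ (v - u) := by
  rw [halfTurn, halfTurn, ← mul_assoc, translation_mul_gent, mul_assoc, ← translation_add,
    neg_add_eq_sub]

theorem halfTurn_mul_halfTurn (u v : ℤ × ℤ) :
    halfTurn m n ℓ u * halfTurn m n ℓ v = translation m n ℓ (v - u) := by
  rw [halfTurn, mul_assoc, translation_mul_halfTurn, halfTurn, ← mul_assoc, gent_mul_self,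
    one_mul]

theorem inv_halfTurn (u : ℤ × ℤ) : (halfTurn m n ℓ u)⁻¹ = halfTurn m n ℓ u :=
  inv_eq_of_mul_eq_one_left (by rw [halfTurn_mul_halfTurn, sub_self, translation_zero])

theorem exists_eq_translation_or_halfTurn (g : G m n ℓ) :
    ∃ v, g = translation m n ℓ v ∨ g = halfTurn m n ℓ v := by
  let K : Subgroup (G m n ℓ) :=
    { carrier := {g | ∃ v, g = translation m n ℓ v ∨ g = halfTurn m n ℓ v}
      one_mem' := ⟨0, .inl translation_zero.symm⟩
      mul_mem' := by
        rintro _ _ ⟨u, rfl | rfl⟩ ⟨v, rfl | rfl⟩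
        · exact ⟨_, .inl (translation_add u v).symm⟩
        · exact ⟨_, .inr (translation_mul_halfTurn u v)⟩
        · exact ⟨_, .inr (halfTurn_mul_translation u v)⟩
        · exact ⟨_, .inl (halfTurn_mul_halfTurn u v)⟩
      inv_mem' := by
        rintro _ ⟨v, rfl | rfl⟩
        · exact ⟨-v, .inl (translation_neg v).symm⟩
        · exact ⟨v, .inr (inv_halfTurn v)⟩ }
  refine PresentedGroup.generated_by _ K (fun j ↦ ?_) g
  cases j
  · exact ⟨0, .inr (by rw [halfTurn, translation_zero, mul_one]; rfl)⟩
  · exact ⟨(1, 0), .inl (by simp [translation, genx])⟩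
  · exact ⟨(0, 1), .inl (by simp [translation, geny])⟩

/-- The corners of the triangle whose half-turns are the generators `t, tx, ty`. -/
def corner : Fin 3 → ℤ × ℤ := ![(0, 0), (1, 0), (0, 1)]

variable (m n ℓ) in
/-- The generators `t, tx, ty` of `G`. -/
def generator (i : Fin 3) : G m n ℓ := halfTurn m n ℓ (corner i)

theorem range_generator : Set.range (generator m n ℓ) = S m n ℓ := by
  ext g
  simp [Fin.exists_fin_succ, generator, corner, halfTurn, translation, S, eq_comm]

theorem generator_mul_generator (i j : Fin 3) :
    generator m n ℓ i * generator m n ℓ j = translation m n ℓ (corner j - corner i) :=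
  halfTurn_mul_halfTurn _ _

theorem generator_zero : generator m n ℓ 0 = gent m n ℓ := by
  simp [generator, corner, halfTurn, translation]

theorem generator_zero_mul_one : generator m n ℓ 0 * generator m n ℓ 1 = genx m n ℓ := by
  simp [generator_mul_generator, corner, translation]

theorem generator_zero_mul_two : generator m n ℓ 0 * generator m n ℓ 2 = geny m n ℓ := by
  simp [generator_mul_generator, corner, translation]

theorem closure_range_generator : Subgroup.closure (Set.range (generator m n ℓ)) = ⊤ := by
  have hmem (i : Fin 3) : generator m n ℓ i ∈ Subgroup.closure (Set.range (generator m n ℓ)) :=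
    Subgroup.subset_closure ⟨i, rfl⟩
  refine (Subgroup.eq_top_iff' _).mpr (PresentedGroup.generated_by _ _ ?_)
  rintro (_ | _ | _)
  · change gent m n ℓ ∈ _
    exact generator_zero (n := n) ▸ hmem 0
  · change genx m n ℓ ∈ _
    exact generator_zero_mul_one (n := n) ▸ mul_mem (hmem 0) (hmem 1)
  · change geny m n ℓ ∈ _
    exact generator_zero_mul_two (n := n) ▸ mul_mem (hmem 0) (hmem 2)

theorem exists_hom_of_involutions {K : Type*} [Group K] (s : Fin 3 → K)
    (hs : ∀ i, s i * s i = 1) (hcomm : Commute (s 0 * s 1) (s 0 * s 2))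
    (hx : (s 0 * s 1) ^ (n / 2) = 1) (hy : (s 0 * s 2) ^ m = (s 0 * s 1) ^ ((ℓ + m) / 2)) :
    ∃ α : G m n ℓ →* K, ∀ i, α (generator m n ℓ i) = s i := by
  have hinv (i : Fin 3) : (s i)⁻¹ = s i := inv_eq_of_mul_eq_one_left (hs i)
  have hcancel (i : Fin 3) (k : K) : s i * (s i * k) = k := by rw [← mul_assoc, hs, one_mul]
  let F : Gen → K
    | .t => s 0
    | .x => s 0 * s 1
    | .y => s 0 * s 2
  have hF : ∀ r ∈ rels m n ℓ, FreeGroup.lift F r = 1 := by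
    rintro r (rfl | rfl | rfl | rfl | rfl | rfl)
    · simp [F, pow_two, hs]
    · simp [F, hx]
    · simp [F, hy]
    · simp [F, hinv, mul_assoc, hs, hcancel]
    · simp [F, hinv, mul_assoc, hs, hcancel]
    · simpa [F, commutatorElement_def] using commutatorElement_eq_one_iff_commute.mpr hcomm
  let α : G m n ℓ →* K := PresentedGroup.toGroup hF
  have hα (j : Gen) : α (PresentedGroup.of j) = F j := PresentedGroup.toGroup.of hF
  have h0 : α (generator m n ℓ 0) = s 0 := by rw [generator_zero]; exact hα .t
  have hmul (i : Fin 3) (h : α (generator m n ℓ 0 * generator m n ℓ i) = s 0 * s i) :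
      α (generator m n ℓ i) = s i := by
    rwa [map_mul, h0, mul_right_inj] at h
  refine ⟨α, fun i ↦ ?_⟩
  fin_cases i
  · exact h0
  · exact hmul 1 (by rw [generator_zero_mul_one]; exact hα .x)
  · exact hmul 2 (by rw [generator_zero_mul_two]; exact hα .y)

theorem translation_ne_halfTurn (u v : ℤ × ℤ) : translation m n ℓ u ≠ halfTurn m n ℓ v := by
  obtain ⟨α, hα⟩ := exists_hom_of_involutions (m := m) (n := n) (ℓ := ℓ)
    (fun _ ↦ (-1 : ℤˣ)) (by simp) (by simp) (by simp) (by simp)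
  have hgen : α (generator m n ℓ 0) = -1 ∧ α (genx m n ℓ) = 1 ∧ α (geny m n ℓ) = 1 :=
    ⟨hα 0, by simp [← generator_zero_mul_one, hα], by simp [← generator_zero_mul_two, hα]⟩
  rw [generator_zero] at hgen
  have htrans (w : ℤ × ℤ) : α (translation m n ℓ w) = 1 := by simp [translation, hgen]
  intro h
  have := congrArg α h
  rw [halfTurn, map_mul, htrans, htrans, hgen.1] at this
  exact absurd this (by decide)

/-- The lattice of periods `⟨(n/2, 0), (-(ℓ+m)/2, m)⟩`: the honeycomb toroidal graph is the
quotient of the hexagonal tessellation by the translations in it. -/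
def periodLattice (m n ℓ : ℕ) : AddSubgroup (ℤ × ℤ) :=
  .closure {(((n / 2 : ℕ) : ℤ), 0), (-(((ℓ + m) / 2 : ℕ) : ℤ), (m : ℤ))}

theorem mem_periodLattice {v : ℤ × ℤ} : v ∈ periodLattice m n ℓ ↔
    ∃ k l : ℤ, v.1 = k * (n / 2 : ℕ) - l * ((ℓ + m) / 2 : ℕ) ∧ v.2 = l * m := by
  rw [periodLattice, AddSubgroup.mem_closure_pair]
  simp [Prod.ext_iff, ← sub_eq_add_neg, eq_comm]

theorem translation_eq_one_of_mem {v : ℤ × ℤ} (hv : v ∈ periodLattice m n ℓ) :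
    translation m n ℓ v = 1 := by
  induction hv using AddSubgroup.closure_induction with
  | mem v hv =>
    rcases hv with rfl | rfl
    · simp only [translation, zpow_natCast, zpow_zero, genx_pow, mul_one]
    · simp only [translation, zpow_neg, zpow_natCast, geny_pow, inv_mul_cancel]
  | zero => exact translation_zero
  | add u v _ _ hu hv => rw [translation_add, hu, hv, mul_one]
  | neg v _ hv => rw [translation_neg, hv, inv_one]

theorem exists_hom_perm_quotient :
    ∃ α : G m n ℓ →* Equiv.Perm ((ℤ × ℤ) ⧸ periodLattice m n ℓ),
      ∀ v q, α (translation m n ℓ v) q = v + q := by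
  let Q := (ℤ × ℤ) ⧸ periodLattice m n ℓ
  let s (i : Fin 3) : Equiv.Perm Q := Equiv.subLeft (-(corner i : Q))
  have hs (i j : Fin 3) : s i * s j = Equiv.addLeft ((corner j - corner i : ℤ × ℤ) : Q) := by
    ext q
    simp only [s, Equiv.Perm.mul_apply, Equiv.subLeft_apply, Equiv.coe_addLeft,
      QuotientAddGroup.mk_sub]
    abel
  let e₁ : Q := ((1, 0) : ℤ × ℤ)
  let e₂ : Q := ((0, 1) : ℤ × ℤ)
  have hx : (n / 2) • e₁ = 0 := (QuotientAddGroup.eq_zero_iff ((n / 2) • ((1, 0) : ℤ × ℤ))).mpr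
    (mem_periodLattice.mpr ⟨1, 0, by simp, by simp⟩)
  have hy : m • e₂ = ((ℓ + m) / 2) • e₁ := sub_eq_zero.mp <| (QuotientAddGroup.eq_zero_iff
    (m • ((0, 1) : ℤ × ℤ) - ((ℓ + m) / 2) • ((1, 0) : ℤ × ℤ))).mpr
    (mem_periodLattice.mpr ⟨0, 1, by simp, by simp⟩)
  have hs₁ : s 0 * s 1 = Equiv.addLeft e₁ := by simp [hs, corner, e₁]
  have hs₂ : s 0 * s 2 = Equiv.addLeft e₂ := by simp [hs, corner, e₂]
  obtain ⟨α, hα⟩ := exists_hom_of_involutions s (m := m) (n := n) (ℓ := ℓ)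
    (by simp [hs]) (by rw [hs₁, hs₂, commute_iff_eq, ← Equiv.addLeft_add, add_comm,
      Equiv.addLeft_add]) (by simp [hs₁, hx]) (by simp [hs₁, hs₂, hy])
  refine ⟨α, fun v q ↦ ?_⟩
  have hv : v.1 • e₁ + v.2 • e₂ = v :=
    congrArg (QuotientAddGroup.mk (s := periodLattice m n ℓ))
      (show v.1 • ((1, 0) : ℤ × ℤ) + v.2 • ((0, 1) : ℤ × ℤ) = v by simp)
  simp [translation, ← generator_zero_mul_one, ← generator_zero_mul_two, hα, hs₁, hs₂, ← hv,
    add_assoc]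

theorem translation_eq_one_iff {v : ℤ × ℤ} :
    translation m n ℓ v = 1 ↔ v ∈ periodLattice m n ℓ := by
  refine ⟨fun h ↦ ?_, translation_eq_one_of_mem⟩
  obtain ⟨α, hα⟩ := exists_hom_perm_quotient (m := m) (n := n) (ℓ := ℓ)
  simpa [h] using (hα v 0).symm

theorem translation_eq_iff {u v : ℤ × ℤ} :
    translation m n ℓ u = translation m n ℓ v ↔ u - v ∈ periodLattice m n ℓ := by
  rw [← translation_eq_one_iff, sub_eq_add_neg, translation_add, translation_neg, mul_inv_eq_one]

theorem halfTurn_eq_iff {u v : ℤ × ℤ} :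
    halfTurn m n ℓ u = halfTurn m n ℓ v ↔ u - v ∈ periodLattice m n ℓ := by
  rw [halfTurn, halfTurn, mul_right_inj, translation_eq_iff]

theorem exists_hom_halfTurn_iff {w : Fin 3 → ℤ × ℤ} :
    (∃ α : G m n ℓ →* G m n ℓ, ∀ i, α (generator m n ℓ i) = halfTurn m n ℓ (w i)) ↔
      (n / 2) • (w 1 - w 0) ∈ periodLattice m n ℓ ∧
      m • (w 2 - w 0) - ((ℓ + m) / 2) • (w 1 - w 0) ∈ periodLattice m n ℓ := by
  rw [← translation_eq_iff, ← translation_eq_one_iff]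
  simp only [translation_nsmul, ← halfTurn_mul_halfTurn]
  constructor
  · rintro ⟨α, hα⟩
    simp only [← hα, ← map_mul, ← map_pow, generator_zero_mul_one, generator_zero_mul_two,
      genx_pow, geny_pow, map_one, true_and]
  · rintro ⟨hx, hy⟩
    refine exists_hom_of_involutions _ (fun i ↦ ?_) ?_ hx hy
    · rw [halfTurn_mul_halfTurn, sub_self, translation_zero]
    · simp only [halfTurn_mul_halfTurn, commute_iff_eq, ← translation_add, add_comm]

theorem mem_inducedPerms_generator_iff {σ : Equiv.Perm (Fin 3)} :
    σ ∈ inducedPerms (generator m n ℓ) ↔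
      (n / 2) • (corner (σ 1) - corner (σ 0)) ∈ periodLattice m n ℓ ∧
      m • (corner (σ 2) - corner (σ 0)) - ((ℓ + m) / 2) • (corner (σ 1) - corner (σ 0)) ∈
        periodLattice m n ℓ := by
  rw [mem_inducedPerms_iff_exists_hom closure_range_generator]
  exact exists_hom_halfTurn_iff (w := corner ∘ σ)

theorem one_notMem_S : 1 ∉ S m n ℓ := by
  rw [← range_generator]
  rintro ⟨i, hi⟩
  exact translation_ne_halfTurn 0 (corner i) (translation_zero.trans hi.symm)

theorem inv_mem_S {s : G m n ℓ} (hs : s ∈ S m n ℓ) : s⁻¹ ∈ S m n ℓ := by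
  rw [← range_generator] at hs ⊢
  obtain ⟨i, rfl⟩ := hs
  exact ⟨i, (inv_halfTurn _).symm⟩

theorem cayley_S_adj {g h : G m n ℓ} :
    (cayley (G m n ℓ) (S m n ℓ)).Adj g h ↔ ∃ i, h = g * generator m n ℓ i := by
  rw [cayley_adj_iff_inv_mul_mem one_notMem_S fun _ ↦ inv_mem_S, ← range_generator, Set.mem_range]
  simp only [eq_inv_mul_iff_mul_eq, eq_comm]

theorem generator_zero_ne_generator_one (hm : 0 < m) (hn : 4 ≤ n) :
    generator m n ℓ 0 ≠ generator m n ℓ 1 := by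
  intro h
  obtain ⟨k, l, h1, h2⟩ := mem_periodLattice.mp (halfTurn_eq_iff.mp h.symm)
  obtain rfl : l = 0 := by simpa [corner, hm.ne'] using h2.symm
  have hdvd : ((n / 2 : ℕ) : ℤ) ∣ 1 := ⟨k, by simpa [corner, mul_comm] using h1⟩
  have := Int.le_of_dvd one_pos hdvd
  omega

theorem exists_hom_pointReflection (c : ℤ × ℤ) :
    ∃ α : G m n ℓ →* G m n ℓ, ∀ i, α (generator m n ℓ i) = halfTurn m n ℓ (c - corner i) := by
  refine exists_hom_halfTurn_iff.mpr ⟨?_, ?_⟩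
  · exact mem_periodLattice.mpr ⟨-1, 0, by simp [corner], by simp [corner]⟩
  · exact mem_periodLattice.mpr ⟨0, -1, by simp [corner], by simp [corner]⟩

-- Two of the three generators coincide, and a point reflection interchanges the remaining two.
theorem autFixing_S_ne_bot_of_not_injective (hm : 0 < m) (hn : 4 ≤ n)
    (h : ¬ Function.Injective (generator m n ℓ)) : autFixing (G m n ℓ) (S m n ℓ) ≠ ⊥ := by
  have h01 := generator_zero_ne_generator_one (ℓ := ℓ) hm hn
  have h2 : generator m n ℓ 2 = generator m n ℓ 0 ∨ generator m n ℓ 2 = generator m n ℓ 1 := by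
    contrapose! h
    intro i j hij
    fin_cases i <;> fin_cases j <;> simp_all
  let s : Fin 2 → G m n ℓ := ![generator m n ℓ 0, generator m n ℓ 1]
  have hinj : Function.Injective s := by
    intro i j hij
    fin_cases i <;> fin_cases j <;> simp_all [s]
  have hrange : Set.range s = Set.range (generator m n ℓ) := by
    refine Set.Subset.antisymm ?_ ?_ <;> rintro _ ⟨i, rfl⟩ <;> fin_cases i
    exacts [⟨0, rfl⟩, ⟨1, rfl⟩, ⟨0, rfl⟩, ⟨1, rfl⟩,
      h2.elim (fun h ↦ ⟨0, h.symm⟩) (fun h ↦ ⟨1, h.symm⟩)]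
  have hgen : Subgroup.closure (Set.range s) = ⊤ := hrange ▸ closure_range_generator
  have hswap : Equiv.swap 0 1 ∈ inducedPerms s := by
    rw [mem_inducedPerms_iff_exists_hom hgen]
    obtain ⟨α, hα⟩ := exists_hom_pointReflection (corner 1) (m := m) (n := n) (ℓ := ℓ)
    have h0 : corner 1 - corner 0 = corner 1 := by decide
    have h1 : corner 1 - corner 1 = corner 0 := by decide
    exact ⟨α, Fin.forall_fin_two.mpr
      ⟨(hα 0).trans (congrArg _ h0), (hα 1).trans (congrArg _ h1)⟩⟩
  rw [← range_generator, ← hrange, Ne, autFixing_range_eq_bot_iff hinj hgen]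
  intro hbot
  simp [hbot] at hswap

theorem autFixing_S_eq_bot_iff (hm : 0 < m) (hn : 4 ≤ n) :
    autFixing (G m n ℓ) (S m n ℓ) = ⊥ ↔ inducedPerms (generator m n ℓ) = ⊥ := by
  by_cases hinj : Function.Injective (generator m n ℓ)
  · rw [← range_generator, autFixing_range_eq_bot_iff hinj closure_range_generator]
  · exact iff_of_false (autFixing_S_ne_bot_of_not_injective hm hn hinj)
      fun h ↦ hinj (injective_of_inducedPerms_eq_bot h)

end Group

theorem nonempty_iso_of_surjective {X V W : Type*} {Γ : SimpleGraph V} {Δ : SimpleGraph W}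
    {f : X → V} {g : X → W} (hf : Function.Surjective f) (hg : Function.Surjective g)
    (heq : ∀ x y, f x = f y ↔ g x = g y) (hadj : ∀ x y, Γ.Adj (f x) (f y) ↔ Δ.Adj (g x) (g y)) :
    Nonempty (Γ ≃g Δ) := by
  obtain ⟨f', hf'⟩ := hf.hasRightInverse
  obtain ⟨g', hg'⟩ := hg.hasRightInverse
  refine ⟨{
    toFun := g ∘ f'
    invFun := f ∘ g'
    left_inv := fun v ↦ ((heq _ _).mpr (hg' _)).trans (hf' v)
    right_inv := fun w ↦ ((heq _ _).mp (hf' _)).trans (hg' w)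
    map_rel_iff' := fun {u v} ↦ ?_ }⟩
  rw [← hf' u, ← hf' v, hadj]
  simp [hf' u, hf' v]

/-- `c` exhibits `Γ` as the quotient, by the translations in `L`, of the hexagonal tessellation
whose vertices are the white cells `(false, u)` and the black cells `(true, u)`, with `(false, u)`
adjacent to `(true, u - corner i)` for `i = 0, 1, 2`. -/
structure IsHoneycombQuotient {V : Type*} (L : AddSubgroup (ℤ × ℤ)) (Γ : SimpleGraph V)
    (c : Bool × ℤ × ℤ → V) : Prop where
  surjective : Function.Surjective c
  eq_iff : ∀ e e' u v, c (e, u) = c (e', v) ↔ e = e' ∧ u - v ∈ L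
  not_adj : ∀ e u v, ¬ Γ.Adj (c (e, u)) (c (e, v))
  adj_iff : ∀ u v, Γ.Adj (c (false, u)) (c (true, v)) ↔ ∃ i, u - v - corner i ∈ L

theorem IsHoneycombQuotient.nonempty_iso {V W : Type*} {L : AddSubgroup (ℤ × ℤ)}
    {Γ : SimpleGraph V} {Δ : SimpleGraph W} {c : Bool × ℤ × ℤ → V} {d : Bool × ℤ × ℤ → W}
    (hc : IsHoneycombQuotient L Γ c) (hd : IsHoneycombQuotient L Δ d) : Nonempty (Γ ≃g Δ) := by
  refine nonempty_iso_of_surjective hc.surjective hd.surjective ?_ ?_ <;>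
    rintro ⟨e, u⟩ ⟨e', v⟩
  · rw [hc.eq_iff, hd.eq_iff]
  · cases e <;> cases e'
    · exact iff_of_false (hc.not_adj _ u v) (hd.not_adj _ u v)
    · rw [hc.adj_iff, hd.adj_iff]
    · rw [Γ.adj_comm, Δ.adj_comm, hc.adj_iff, hd.adj_iff]
    · exact iff_of_false (hc.not_adj _ u v) (hd.not_adj _ u v)

theorem isHoneycombQuotient_cayley (m n ℓ : ℕ) :
    IsHoneycombQuotient (periodLattice m n ℓ) (cayley (G m n ℓ) (S m n ℓ))
      fun x ↦ if x.1 then halfTurn m n ℓ (-x.2) else translation m n ℓ x.2 where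
  surjective g := by
    obtain ⟨v, rfl | rfl⟩ := exists_eq_translation_or_halfTurn g
    · exact ⟨(false, v), by simp⟩
    · exact ⟨(true, -v), by simp⟩
  eq_iff e e' u v := by
    cases e <;> cases e'
    · simpa using translation_eq_iff
    · simpa using translation_ne_halfTurn u (-v)
    · simpa using (translation_ne_halfTurn v (-u)).symm
    · have h := halfTurn_eq_iff (m := m) (n := n) (ℓ := ℓ) (u := -u) (v := -v)
      rw [neg_sub_neg, sub_mem_comm_iff] at h
      simpa using h
  not_adj e u v := by
    rw [cayley_S_adj]
    rintro ⟨i, hi⟩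
    rw [generator] at hi
    cases e
    · exact translation_ne_halfTurn _ _ (hi.trans (translation_mul_halfTurn _ _))
    · exact translation_ne_halfTurn _ _ (hi.trans (halfTurn_mul_halfTurn _ _)).symm
  adj_iff u v := by
    rw [cayley_S_adj]
    refine exists_congr fun i ↦ ?_
    rw [generator, if_pos rfl, if_neg Bool.false_ne_true, translation_mul_halfTurn,
      halfTurn_eq_iff, sub_sub_eq_add_sub, neg_add_eq_sub]

section HTG

variable {m n ℓ : ℕ}

/-- The vertex of `HTG(m,n,ℓ)` in column `i` and row `j` of its universal cover: the column `i + m`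
is glued to the column `i` with a shift by `ℓ`. -/
def brick (m n ℓ : ℕ) (i j : ℤ) : ZMod m × ZMod n :=
  ((i : ZMod m), ((j + ℓ * (i / m) : ℤ) : ZMod n))

theorem brick_add_mul (hm : 0 < m) (i j q : ℤ) :
    brick m n ℓ (i + m * q) j = brick m n ℓ i (j + ℓ * q) := by
  have hm' : (m : ℤ) ≠ 0 := by exact_mod_cast hm.ne'
  rw [brick, brick, Int.add_mul_ediv_left _ _ hm', mul_add, add_assoc, add_comm (ℓ * (i / m) : ℤ)]
  simp

theorem brick_eq_iff (hm : 0 < m) {i j i' j' : ℤ} : brick m n ℓ i j = brick m n ℓ i' j' ↔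
    ∃ k l : ℤ, i - i' = l * m ∧ j - j' = k * n - l * ℓ := by
  have hrow (l : ℤ) : brick m n ℓ (i' + m * l) j = brick m n ℓ i' j' ↔
      ∃ k : ℤ, j - j' = k * n - l * ℓ := by
    rw [brick_add_mul hm, brick, brick, Prod.mk_right_inj, eq_comm,
      ZMod.intCast_eq_intCast_iff_dvd_sub]
    exact exists_congr fun k ↦ by constructor <;> intro h <;> linarith
  constructor
  · intro h
    obtain ⟨l, hl⟩ := (ZMod.intCast_eq_intCast_iff_dvd_sub _ _ _).mp (congrArg Prod.fst h).symm
    obtain rfl : i = i' + m * l := by linarith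
    obtain ⟨k, hk⟩ := (hrow l).mp h
    exact ⟨k, l, by ring, hk⟩
  · rintro ⟨k, l, hi, hj⟩
    obtain rfl : i = i' + m * l := by linarith
    exact (hrow l).mpr ⟨k, hj⟩

theorem exists_eq_brick (v : ZMod m × ZMod n) : ∃ i j, v = brick m n ℓ i j := by
  obtain ⟨i, hi⟩ := ZMod.intCast_surjective v.1
  obtain ⟨j, hj⟩ := ZMod.intCast_surjective v.2
  exact ⟨i, j - ℓ * (i / m), Prod.ext hi.symm (by rw [brick, sub_add_cancel, hj])⟩

theorem val_intCast_emod_two (hn : 0 < n) (hne : Even n) (j : ℤ) :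
    ((j : ZMod n).val : ℤ) % 2 = j % 2 := by
  have : NeZero n := ⟨hn.ne'⟩
  rw [ZMod.val_intCast, Int.emod_emod_of_dvd _ (by exact_mod_cast hne.two_dvd)]

/-- `v` and `w` are consecutive vertices of a column. -/
def IsVertical {m n : ℕ} (v w : ZMod m × ZMod n) : Prop :=
  v.1 = w.1 ∧ (w.2 = v.2 + 1 ∨ w.2 = v.2 - 1)

/-- `w` is the neighbour of `v` in the next column. -/
def IsRung (ℓ : ℕ) {m n : ℕ} (v w : ZMod m × ZMod n) : Prop :=
  (v.1.val ≠ m - 1 ∧ w.1 = v.1 + 1 ∧ w.2 = v.2 ∧ v.1.val % 2 ≠ v.2.val % 2) ∨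
    (v.1.val = m - 1 ∧ w.1 = 0 ∧ w.2 = v.2 + (ℓ : ZMod n) ∧ v.2.val % 2 = m % 2)

theorem HTG_adj {v w : ZMod m × ZMod n} : (HTG m n ℓ).Adj v w ↔
    v ≠ w ∧ ((IsVertical v w ∨ IsRung ℓ v w) ∨ (IsVertical w v ∨ IsRung ℓ w v)) := Iff.rfl

theorem isVertical_brick_iff {i j : ℤ} {w : ZMod m × ZMod n} : IsVertical (brick m n ℓ i j) w ↔
    w = brick m n ℓ i (j + 1) ∨ w = brick m n ℓ i (j - 1) := by
  simp only [IsVertical, brick, Prod.ext_iff, ← and_or_left]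
  push_cast
  grind

theorem isRung_brick_iff_of_lt (hn : 0 < n) (hne : Even n) {i j : ℤ} (hi : 0 ≤ i) (him : i < m)
    {w : ZMod m × ZMod n} :
    IsRung ℓ (brick m n ℓ i j) w ↔ Odd (i + j) ∧ w = brick m n ℓ (i + 1) j := by
  have hj := val_intCast_emod_two hn hne j
  have hival : (((i : ZMod m)).val : ℤ) = i := by
    have : NeZero m := ⟨by omega⟩
    rw [ZMod.val_intCast, Int.emod_eq_of_lt hi him]
  have hbrick : brick m n ℓ i j = ((i : ZMod m), (j : ZMod n)) := by
    rw [brick, Int.ediv_eq_zero_of_lt hi him, mul_zero, add_zero]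
  rw [hbrick, IsRung, Int.odd_iff, Prod.ext_iff]
  rcases eq_or_ne i (m - 1) with rfl | hlast
  · have hnext : brick m n ℓ (m - 1 + 1) j = (0, (j : ZMod n) + ℓ) := by
      rw [brick, sub_add_cancel, Int.ediv_self (by omega)]
      simp
    rw [hnext]
    have hval : ((m - 1 : ℤ) : ZMod m).val = m - 1 := by omega
    have hparity : (j : ZMod n).val % 2 = m % 2 ↔ ((m : ℤ) - 1 + j) % 2 = 1 := by omega
    simp only [hval, hparity]
    tauto
  · have hnext : brick m n ℓ (i + 1) j = ((i : ZMod m) + 1, (j : ZMod n)) := by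
      rw [brick, Int.ediv_eq_zero_of_lt (by omega) (by omega)]
      simp
    rw [hnext]
    have hval : (i : ZMod m).val ≠ m - 1 := by omega
    have hparity : (i : ZMod m).val % 2 ≠ (j : ZMod n).val % 2 ↔ (i + j) % 2 = 1 := by omega
    simp only [hval, hparity]
    tauto

theorem isRung_brick_iff (hm : 0 < m) (hn : 0 < n) (hne : Even n) (hpar : ℓ % 2 = m % 2)
    {i j : ℤ} {w : ZMod m × ZMod n} :
    IsRung ℓ (brick m n ℓ i j) w ↔ Odd (i + j) ∧ w = brick m n ℓ (i + 1) j := by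
  have hm' : (0 : ℤ) < m := by exact_mod_cast hm
  obtain ⟨r, q, hr, hrm, rfl⟩ : ∃ r q : ℤ, 0 ≤ r ∧ r < m ∧ i = r + m * q :=
    ⟨i % m, i / m, Int.emod_nonneg _ hm'.ne', Int.emod_lt_of_pos _ hm',
      (Int.emod_add_mul_ediv ..).symm⟩
  have hparity : Odd (r + (j + ℓ * q)) ↔ Odd (r + m * q + j) := by
    have : Even (ℓ : ℤ) ↔ Even (m : ℤ) := by
      simp only [Int.even_coe_nat, Nat.even_iff, hpar]
    simp only [Int.even_add, Int.even_mul, this, ← Int.not_even_iff_odd]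
    tauto
  rw [brick_add_mul hm, isRung_brick_iff_of_lt hn hne hr hrm, hparity, ← brick_add_mul hm,
    add_right_comm r 1]

/-- The vertex of `HTG(m,n,ℓ)` covered by a cell of the hexagonal tessellation. -/
def cell (m n ℓ : ℕ) (x : Bool × ℤ × ℤ) : ZMod m × ZMod n :=
  brick m n ℓ x.2.2 (2 * x.2.1 + x.2.2 + x.1.toNat)

theorem cell_surjective : Function.Surjective (cell m n ℓ) := by
  intro v
  obtain ⟨i, j, rfl⟩ := exists_eq_brick (ℓ := ℓ) v
  obtain ⟨a, ha | ha⟩ := Int.even_or_odd' (j - i)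
  · exact ⟨(false, a, i), by simp [cell, ← ha]⟩
  · refine ⟨(true, a, i), ?_⟩
    rw [eq_add_of_sub_eq ha]
    simp [cell, add_right_comm]

theorem cell_eq_iff (hm : 0 < m) (hne : Even n) (hpar : ℓ % 2 = m % 2) {e e' : Bool}
    {u v : ℤ × ℤ} :
    cell m n ℓ (e, u) = cell m n ℓ (e', v) ↔ e = e' ∧ u - v ∈ periodLattice m n ℓ := by
  obtain ⟨N, rfl⟩ := hne.two_dvd
  obtain ⟨p, hp⟩ : 2 ∣ ℓ + m := by omega
  have hp' : (ℓ : ℤ) = 2 * p - m := by omega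
  have hN : 2 * N / 2 = N := by omega
  have hp2 : (ℓ + m) / 2 = p := by omega
  rw [cell, cell, brick_eq_iff hm, mem_periodLattice, hN, hp2, ← exists_and_left]
  refine exists_congr fun k ↦ ?_
  rw [← exists_and_left]
  refine exists_congr fun l ↦ ?_
  have hcol : (k * (2 * N : ℕ) - l * ℓ : ℤ) = 2 * (k * N - l * p) + l * m := by
    rw [hp']
    push_cast
    ring
  rw [hcol, Prod.fst_sub, Prod.snd_sub]
  cases e <;> cases e' <;> simp <;> omega

theorem isArc_cell_false_iff (hm : 0 < m) (hn : 0 < n) (hne : Even n) (hpar : ℓ % 2 = m % 2)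
    {u : ℤ × ℤ} {w : ZMod m × ZMod n} :
    IsVertical (cell m n ℓ (false, u)) w ∨ IsRung ℓ (cell m n ℓ (false, u)) w ↔
      w = cell m n ℓ (true, u - corner 0) ∨ w = cell m n ℓ (true, u - corner 1) := by
  have heven : ¬ Odd (u.2 + (2 * u.1 + u.2)) := by
    rw [Int.odd_iff]
    omega
  have hleft : 2 * u.1 + u.2 - 1 = 2 * (u.1 - 1) + u.2 + 1 := by ring
  rw [cell, isVertical_brick_iff, isRung_brick_iff hm hn hne hpar]
  simp [heven, cell, hleft, corner]

theorem isArc_cell_true_iff (hm : 0 < m) (hn : 0 < n) (hne : Even n) (hpar : ℓ % 2 = m % 2)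
    {u : ℤ × ℤ} {w : ZMod m × ZMod n} :
    IsVertical (cell m n ℓ (true, u)) w ∨ IsRung ℓ (cell m n ℓ (true, u)) w ↔
      ∃ i, w = cell m n ℓ (false, u + corner i) := by
  have hodd : Odd (u.2 + (2 * u.1 + u.2 + 1)) := by
    rw [Int.odd_iff]
    omega
  have hright : 2 * u.1 + u.2 + 1 + 1 = 2 * (u.1 + 1) + u.2 := by ring
  have hcorner : (∃ i, w = cell m n ℓ (false, u + corner i)) ↔
      (w = brick m n ℓ u.2 (2 * (u.1 + 1) + u.2) ∨ w = brick m n ℓ u.2 (2 * u.1 + u.2)) ∨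
        w = brick m n ℓ (u.2 + 1) (2 * u.1 + u.2 + 1) := by
    simp [Fin.exists_fin_succ, corner, cell, add_assoc, or_assoc, or_left_comm]
  rw [hcorner, cell, isVertical_brick_iff, isRung_brick_iff hm hn hne hpar]
  simp [hodd, hright]

theorem isHoneycombQuotient_HTG (hm : 0 < m) (hn : 0 < n) (hne : Even n)
    (hpar : ℓ % 2 = m % 2) :
    IsHoneycombQuotient (periodLattice m n ℓ) (HTG m n ℓ) (cell m n ℓ) where
  surjective := cell_surjective
  eq_iff e e' u v := cell_eq_iff hm hne hpar
  not_adj e u v := by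
    cases e <;>
      simp [HTG_adj, isArc_cell_false_iff hm hn hne hpar, isArc_cell_true_iff hm hn hne hpar,
        cell_eq_iff hm hne hpar]
  adj_iff u v := by
    have hwhite (i : Fin 3) : cell m n ℓ (false, u) = cell m n ℓ (false, v + corner i) ↔
        u - v - corner i ∈ periodLattice m n ℓ := by
      rw [cell_eq_iff hm hne hpar, sub_sub, eq_self, true_and]
    have hblack (i : Fin 3) : cell m n ℓ (true, v) = cell m n ℓ (true, u - corner i) ↔
        u - v - corner i ∈ periodLattice m n ℓ := by
      rw [cell_eq_iff hm hne hpar, sub_mem_comm_iff, sub_right_comm, eq_self, true_and]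
    have hcolour : cell m n ℓ (false, u) ≠ cell m n ℓ (true, v) := by
      simp [cell_eq_iff hm hne hpar]
    rw [HTG_adj, isArc_cell_false_iff hm hn hne hpar, isArc_cell_true_iff hm hn hne hpar]
    simp only [hwhite, hblack, ne_eq, hcolour, not_false_eq_true, true_and]
    exact or_iff_right_of_imp fun h ↦ h.elim (⟨0, ·⟩) (⟨1, ·⟩)

end HTG

theorem gcd_mul_right_of_isCoprime {l k : ℤ} (h : IsCoprime l k) (d : ℕ) :
    Int.gcd (l * d) (k * d) = d := by
  rw [Int.gcd_mul_right, Int.isCoprime_iff_gcd_eq_one.mp h, one_mul, Int.natAbs_natCast]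

theorem gcd_eq_and_mul_dvd_iff {d : ℕ} (hd : 0 < d) {a q X : ℤ} {f : ℤ → ℤ}
    (hf : ∀ l k, l ∣ f k → IsCoprime l k) (hX : ∀ k, q = k * d → X = d ^ 2 * f k) :
    Int.gcd a q = d ∧ d * a ∣ X ↔ ∃ l k, a = l * d ∧ q = k * d ∧ l ∣ f k := by
  have hd' : (d : ℤ) ≠ 0 := by exact_mod_cast hd.ne'
  have hdvd {l k : ℤ} (ha : a = l * d) (hq : q = k * d) : d * a ∣ X ↔ l ∣ f k := by
    rw [hX k hq, ha, show (d : ℤ) * (l * d) = d ^ 2 * l by ring,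
      mul_dvd_mul_iff_left (pow_ne_zero 2 hd')]
  constructor
  · rintro ⟨hgcd, h⟩
    obtain ⟨l, ha⟩ := hgcd ▸ Int.gcd_dvd_left a q
    obtain ⟨k, hq⟩ := hgcd ▸ Int.gcd_dvd_right a q
    rw [mul_comm] at ha hq
    exact ⟨l, k, ha, hq, (hdvd ha hq).mp h⟩
  · rintro ⟨l, k, ha, hq, h⟩
    refine ⟨?_, (hdvd ha hq).mpr h⟩
    rw [ha, hq, gcd_mul_right_of_isCoprime (hf l k h)]

section Conditions

variable {m n ℓ : ℕ}

theorem half_nsmul_mem_periodLattice_iff (hn : 0 < n / 2) {a ε : ℤ} (hε : ε * ε = 1) :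
    (n / 2) • (a, ε) ∈ periodLattice m n ℓ ↔
      ∃ l k : ℤ, ((n / 2 : ℕ) : ℤ) = l * m ∧ (((ℓ + m) / 2 : ℕ) : ℤ) = k * m := by
  rw [mem_periodLattice, Prod.smul_mk, nsmul_eq_mul, nsmul_eq_mul]
  constructor
  · rintro ⟨c, l, h1, h2⟩
    have hl : l ≠ 0 := by
      rintro rfl
      have hε0 : ε ≠ 0 := left_ne_zero_of_mul_eq_one hε
      exact mul_ne_zero (by exact_mod_cast hn.ne') hε0 (h2.trans (zero_mul _))
    dsimp only at h1 h2
    have hN : ((n / 2 : ℕ) : ℤ) = ε * l * m := by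
      linear_combination ε * h2 - ((n / 2 : ℕ) : ℤ) * hε
    refine ⟨ε * l, (c - a) * ε, hN, mul_left_cancel₀ hl ?_⟩
    linear_combination h1 + (c - a) * hN
  · rintro ⟨l, k, hN, hp⟩
    refine ⟨a + ε * k, ε * l, ?_, ?_⟩ <;> dsimp only
    · linear_combination ε * l * hp - ε * k * hN
    · linear_combination ε * hN

theorem nsmul_mem_periodLattice_iff (hm : 0 < m) {l k : ℤ} (hl : ((n / 2 : ℕ) : ℤ) = l * m)
    (hk : (((ℓ + m) / 2 : ℕ) : ℤ) = k * m) {a b : ℤ} :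
    m • (a, b) ∈ periodLattice m n ℓ ↔ l ∣ a + k * b := by
  have hm' : (m : ℤ) ≠ 0 := by exact_mod_cast hm.ne'
  rw [mem_periodLattice, hl, hk, Prod.smul_mk, nsmul_eq_mul, nsmul_eq_mul]
  constructor
  · rintro ⟨c, b', h1, h2⟩
    obtain rfl : b = b' := mul_left_cancel₀ hm' (by linear_combination h2)
    exact ⟨c, mul_left_cancel₀ hm' (by linear_combination h1)⟩
  · rintro ⟨c, hc⟩
    refine ⟨c, b, ?_, mul_comm ..⟩
    linear_combination (m : ℤ) * hc

theorem mem_inducedPerms_generator_iff_dvd (hm : 0 < m) (hn : 0 < n) (hne : Even n)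
    (hpar : ℓ % 2 = m % 2) {σ : Equiv.Perm (Fin 3)} {a ε b c : ℤ} (hε : ε * ε = 1)
    (hu : corner (σ 1) - corner (σ 0) = (a, ε)) (hv : corner (σ 2) - corner (σ 0) = (b, c)) :
    σ ∈ inducedPerms (generator m n ℓ) ↔ ∃ l k : ℤ, (n : ℤ) = l * (2 * m) ∧
      (ℓ + m : ℤ) = k * (2 * m) ∧ l ∣ (b - k * a) + k * (c - k * ε) := by
  obtain ⟨N, rfl⟩ := hne.two_dvd
  obtain ⟨p, hp⟩ : 2 ∣ ℓ + m := by omega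
  have hN : 2 * N / 2 = N := by omega
  have hp2 : (ℓ + m) / 2 = p := by omega
  rw [mem_inducedPerms_generator_iff, hu, hv, half_nsmul_mem_periodLattice_iff (by omega) hε, hN,
    hp2]
  simp only [← exists_and_right, and_assoc]
  refine exists₂_congr fun l k ↦ ?_
  have hl : (N : ℤ) = l * m ↔ ((2 * N : ℕ) : ℤ) = l * (2 * m) := by
    rw [mul_left_comm, Nat.cast_mul, Nat.cast_two, mul_right_inj' two_ne_zero]
  have hk : (p : ℤ) = k * m ↔ (ℓ + m : ℤ) = k * (2 * m) := by
    rw [mul_left_comm, ← Nat.cast_add, hp, Nat.cast_mul, Nat.cast_two, mul_right_inj' two_ne_zero]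
  rw [← hl, ← hk]
  refine and_congr_right fun hl ↦ and_congr_right fun hk ↦ ?_
  have hvec : m • (b, c) - p • (a, ε) = m • (b - k * a, c - k * ε) := by
    ext <;> simp [hk] <;> ring
  rw [hvec, nsmul_mem_periodLattice_iff hm (hN.symm ▸ hl) (hp2.symm ▸ hk)]

theorem C1_iff_exists (hm : 0 < m) : C1 m n ℓ ↔
    ∃ l k : ℤ, (n : ℤ) = l * (2 * m) ∧ (ℓ + m : ℤ) = k * (2 * m) ∧ l ∣ k ^ 2 - 1 := by
  have h := gcd_eq_and_mul_dvd_iff (d := 2 * m) (by omega) (a := n) (q := ℓ + m)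
    (X := ℓ ^ 2 + 2 * m * ℓ - 3 * m ^ 2) (f := fun k ↦ k ^ 2 - 1)
    (fun l k ⟨c, hc⟩ ↦ ⟨-c, k, by linear_combination hc⟩)
    (fun k hk ↦ by rw [eq_sub_of_add_eq hk]; push_cast; ring)
  push_cast at h
  exact h

theorem C2_iff_exists (hm : 0 < m) : C2 m n ℓ ↔
    ∃ l k : ℤ, (n : ℤ) = l * (2 * m) ∧ (ℓ + m : ℤ) = k * (2 * m) ∧ l ∣ k ^ 2 - 2 * k := by
  have h := gcd_eq_and_mul_dvd_iff (d := 2 * m) (by omega) (a := n) (q := ℓ - m)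
    (X := ℓ ^ 2 - 2 * m * ℓ - 3 * m ^ 2) (f := fun k ↦ k ^ 2 - 1)
    (fun l k ⟨c, hc⟩ ↦ ⟨-c, k, by linear_combination hc⟩)
    (fun k hk ↦ by rw [eq_add_of_sub_eq hk]; push_cast; ring)
  push_cast at h
  refine h.trans (exists_congr fun l ↦ (Equiv.addRight (1 : ℤ)).exists_congr fun k ↦ ?_)
  have hk : (ℓ - m : ℤ) = k * (2 * m) ↔ (ℓ + m : ℤ) = (k + 1) * (2 * m) := by
    constructor <;> intro h <;> linear_combination h
  rw [Equiv.coe_addRight, hk, show (k + 1) ^ 2 - 2 * (k + 1) = k ^ 2 - 1 by ring]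

theorem C4_iff_exists (hm : 0 < m) : C4 m n ℓ ↔
    ∃ l k : ℤ, (n : ℤ) = l * (2 * m) ∧ (ℓ + m : ℤ) = k * (2 * m) ∧ l ∣ k ^ 2 - k + 1 := by
  have h := gcd_eq_and_mul_dvd_iff (d := 2 * m) (by omega) (a := n) (q := ℓ + m)
    (X := ℓ ^ 2 + 3 * m ^ 2) (f := fun k ↦ k ^ 2 - k + 1)
    (fun l k ⟨c, hc⟩ ↦ ⟨c, 1 - k, by linear_combination -hc⟩)
    (fun k hk ↦ by rw [eq_sub_of_add_eq hk]; push_cast; ring)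
  push_cast at h
  have hgcd : (∃ l k : ℤ, (n : ℤ) = l * (2 * m) ∧ (ℓ + m : ℤ) = k * (2 * m) ∧
      l ∣ k ^ 2 - k + 1) → Int.gcd n (ℓ - m) = 2 * m := by
    rintro ⟨l, k, hn, hk, c, hc⟩
    have hcop : IsCoprime l (k - 1) := ⟨c, -k, by linear_combination -hc⟩
    have hq : (ℓ - m : ℤ) = (k - 1) * (2 * m : ℕ) := by push_cast; linear_combination hk
    rw [← gcd_mul_right_of_isCoprime hcop (2 * m), hn, hq, Nat.cast_mul, Nat.cast_two]
  rw [C4, and_left_comm, h, and_iff_right_of_imp hgcd]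

theorem swap_one_two_mem_inducedPerms_iff (hm : 0 < m) (hn : 0 < n) (hne : Even n)
    (hpar : ℓ % 2 = m % 2) : Equiv.swap 1 2 ∈ inducedPerms (generator m n ℓ) ↔ C1 m n ℓ := by
  rw [C1_iff_exists hm, mem_inducedPerms_generator_iff_dvd hm hn hne hpar (a := 0) (ε := 1)
    (b := 1) (c := 0) rfl (by decide) (by decide)]
  refine exists₂_congr fun l k ↦ ?_
  rw [← dvd_neg]
  ring_nf

theorem swap_zero_two_mem_inducedPerms_iff (hm : 0 < m) (hn : 0 < n) (hne : Even n)
    (hpar : ℓ % 2 = m % 2) : Equiv.swap 0 2 ∈ inducedPerms (generator m n ℓ) ↔ C2 m n ℓ := by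
  rw [C2_iff_exists hm, mem_inducedPerms_generator_iff_dvd hm hn hne hpar (a := 1) (ε := -1)
    (b := 0) (c := -1) rfl (by decide) (by decide)]
  refine exists₂_congr fun l k ↦ ?_
  ring_nf

theorem finRotate_mem_inducedPerms_iff (hm : 0 < m) (hn : 0 < n) (hne : Even n)
    (hpar : ℓ % 2 = m % 2) : finRotate 3 ∈ inducedPerms (generator m n ℓ) ↔ C4 m n ℓ := by
  rw [C4_iff_exists hm, mem_inducedPerms_generator_iff_dvd hm hn hne hpar (a := -1) (ε := 1)
    (b := -1) (c := 0) rfl (by decide) (by decide)]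
  refine exists₂_congr fun l k ↦ ?_
  rw [← dvd_neg]
  ring_nf

theorem reflection_mem_periodLattice_iff (hm : 0 < m) (hpar : ℓ % 2 = m % 2) :
    m • (-1, 1) - ((ℓ + m) / 2) • (-1, 0) ∈ periodLattice m n ℓ ↔ n / 2 ∣ ℓ := by
  obtain ⟨p, hp⟩ : 2 ∣ ℓ + m := by omega
  have hp2 : (ℓ + m) / 2 = p := by omega
  have hℓ : (ℓ : ℤ) = 2 * p - m := by omega
  have hm' : (m : ℤ) ≠ 0 := by exact_mod_cast hm.ne'
  rw [mem_periodLattice, hp2, ← Int.natCast_dvd_natCast, hℓ]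
  simp only [Prod.smul_mk, Prod.mk_sub_mk, nsmul_eq_mul]
  constructor
  · rintro ⟨c, l, h1, h2⟩
    obtain rfl : l = 1 := mul_right_cancel₀ hm' (by linear_combination -h2)
    exact ⟨c, by linear_combination h1⟩
  · rintro ⟨c, hc⟩
    exact ⟨c, 1, by linear_combination hc, by ring⟩

theorem swap_zero_one_mem_inducedPerms_iff (hm : 0 < m) (hl : ℓ < n) (hne : Even n)
    (hpar : ℓ % 2 = m % 2) : Equiv.swap 0 1 ∈ inducedPerms (generator m n ℓ) ↔ C3 m n ℓ := by
  have hu : corner (Equiv.swap 0 1 1) - corner (Equiv.swap 0 1 0) = (-1, 0) := by decide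
  have hv : corner (Equiv.swap 0 1 2) - corner (Equiv.swap 0 1 0) = (-1, 1) := by decide
  have htrivial : (n / 2) • ((-1, 0) : ℤ × ℤ) ∈ periodLattice m n ℓ :=
    mem_periodLattice.mpr ⟨-1, 0, by simp, by simp⟩
  rw [mem_inducedPerms_generator_iff, hu, hv, and_iff_right htrivial,
    reflection_mem_periodLattice_iff hm hpar, C3]
  obtain ⟨N, rfl⟩ := hne.two_dvd
  rw [Nat.mul_div_cancel_left N two_pos]
  constructor
  · rintro ⟨c, rfl⟩
    have hc : c < 2 := lt_of_mul_lt_mul_left (by linarith) (Nat.zero_le N)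
    interval_cases c <;> simp
  · rintro (rfl | h)
    · exact dvd_zero N
    · exact ⟨1, by omega⟩

end Conditions

theorem statement4_general (m n ℓ : ℕ) (hm : 0 < m) (hn : 4 ≤ n) (hne : Even n)
    (hl : ℓ < n) (hpar : ℓ % 2 = m % 2)
    (hnorm : IsNormalCayley (G m n ℓ) (S m n ℓ)) :
    (∀ u v : ZMod m × ZMod n, ∃! f : HTG m n ℓ ≃g HTG m n ℓ, f u = v) ↔
      (¬ C1 m n ℓ ∧ ¬ C2 m n ℓ ∧ ¬ C3 m n ℓ ∧ ¬ C4 m n ℓ) := by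
  have hn0 : 0 < n := by omega
  obtain ⟨e⟩ := (isHoneycombQuotient_HTG hm hn0 hne hpar).nonempty_iso
    (isHoneycombQuotient_cayley m n ℓ)
  calc AutActsRegularly (HTG m n ℓ)
    _ ↔ AutActsRegularly (cayley (G m n ℓ) (S m n ℓ)) := autActsRegularly_congr e
    _ ↔ autFixing (G m n ℓ) (S m n ℓ) = ⊥ :=
      hnorm.autActsRegularly_iff one_notMem_S fun _ ↦ inv_mem_S
    _ ↔ inducedPerms (generator m n ℓ) = ⊥ := autFixing_S_eq_bot_iff hm hn
    _ ↔ _ := by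
      rw [subgroup_perm_fin_three_eq_bot_iff, swap_one_two_mem_inducedPerms_iff hm hn0 hne hpar,
        swap_zero_two_mem_inducedPerms_iff hm hn0 hne hpar,
        swap_zero_one_mem_inducedPerms_iff hm hl hne hpar,
        finRotate_mem_inducedPerms_iff hm hn0 hne hpar]

/-- **Theorem 2, fourth item.** Assuming `Γ = HTG(m,n,ℓ)` is a normal Cayley graph of `G`,
`Aut(Γ)` acts regularly on the vertex set of `Γ` iff none of (c1)–(c4) holds. -/
theorem statement4 (m n ℓ : ℕ) (hm : 0 < m) (hn : 4 ≤ n) (hne : Even n)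
    (hl : ℓ ≤ n / 2) (hpar : ℓ % 2 = m % 2)
    (hnorm : IsNormalCayley (G m n ℓ) (S m n ℓ)) :
    (∀ u v : ZMod m × ZMod n, ∃! f : HTG m n ℓ ≃g HTG m n ℓ, f u = v) ↔
      (¬ C1 m n ℓ ∧ ¬ C2 m n ℓ ∧ ¬ C3 m n ℓ ∧ ¬ C4 m n ℓ) :=
  statement4_general m n ℓ hm hn hne (by omega) hpar hnorm

end HTGPaper
end

section
/- Let m and n be positive integers with n ≥ 4 even, let 0 ≤ ℓ ≤ n−1 be an integer of the same parity as m, and let G = ⟨t, x, y | t² = 1, x^{n/2} = 1, y^m = x^{(ℓ+m)/2}, txt = x⁻¹, tyt = y⁻¹, xy = yx⟩. Then there exists an automorphism of G fixing t and interchanging tx with ty if and only if gcd(n, ℓ+m) = 2m and 2mn divides ℓ² + 2mℓ − 3m². -/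
namespace HTGPaper

/-!
An automorphism fixing `t` and interchanging `t * x` with `t * y` exists exactly when `x` and `y`
may be interchanged in the defining relations. Let `N = n / 2`, `k = (ℓ + m) / 2` and let `L ⊆ ℤ²`
be the lattice spanned by `(N, 0)` and `(-k, m)`. Since `G` acts on `ℤ² / L`, with `t` acting as
negation and `x`, `y` as the two unit translations, `x ^ a * y ^ b = 1` holds in `G` only for
`(a, b) ∈ L`. Hence the interchange is possible exactly when `L` is stable under swapping
coordinates, that is, when `L` contains `(0, N)` and `(m, -k)`. The first membership gives `m ∣ N`;
the second gives `m ∣ k` and writes `m` as an integer combination of `N` and `k`, so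
`gcd(N, k) = m`, and eliminating the coefficients leaves `m * N ∣ k² - m²`.
-/

/-- The relations defining a generalized dihedral group generated by an involution `t` and commuting
elements `x`, `y`; for `N = n / 2` and `k = (ℓ + m) / 2` they are those of `G m n ℓ`. -/
structure IsDihedralTriple {H : Type*} [Group H] (m N k : ℕ) (t x y : H) : Prop where
  t_sq : t ^ 2 = 1
  x_pow : x ^ N = 1
  y_pow : y ^ m = x ^ k
  t_conj_x : t * x * t⁻¹ = x⁻¹
  t_conj_y : t * y * t⁻¹ = y⁻¹
  commute : Commute x y

/-- The lattice of exponents `(a, b)` for which `x ^ N = 1` and `y ^ m = x ^ k`, for commuting `x`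
and `y`, force `x ^ a * y ^ b = 1`. -/
def relationLattice (m N k : ℕ) : AddSubgroup (ℤ × ℤ) :=
  AddSubgroup.closure {((N : ℤ), 0), (-(k : ℤ), (m : ℤ))}

theorem mem_relationLattice {m N k : ℕ} {a b : ℤ} :
    (a, b) ∈ relationLattice m N k ↔ ∃ u v : ℤ, u * N - v * k = a ∧ v * m = b := by
  simp [relationLattice, AddSubgroup.mem_closure_pair, sub_eq_add_neg]

theorem forall_swap_mem_relationLattice_iff_generators {m N k : ℕ} :
    (∀ p ∈ relationLattice m N k, p.swap ∈ relationLattice m N k) ↔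
      (0, (N : ℤ)) ∈ relationLattice m N k ∧ ((m : ℤ), -(k : ℤ)) ∈ relationLattice m N k := by
  let swap : ℤ × ℤ →+ ℤ × ℤ := (AddEquiv.prodComm : ℤ × ℤ ≃+ ℤ × ℤ)
  exact (AddSubgroup.closure_le ((relationLattice m N k).comap swap)).trans Set.pair_subset_iff

theorem forall_swap_mem_relationLattice_iff {m N k : ℕ} :
    (∀ p ∈ relationLattice m N k, p.swap ∈ relationLattice m N k) ↔
      N.gcd k = m ∧ (m * N : ℤ) ∣ (k : ℤ) ^ 2 - m ^ 2 := by
  rw [forall_swap_mem_relationLattice_iff_generators, mem_relationLattice, mem_relationLattice]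
  constructor
  · rintro ⟨⟨-, v, -, hN⟩, ⟨u, w, hm, hk⟩⟩
    have hmN : m ∣ N := Int.natCast_dvd_natCast.1 ⟨v, by linarith⟩
    have hmk : m ∣ k := Int.natCast_dvd_natCast.1 ⟨-w, by linarith⟩
    have hgcd_dvd : N.gcd k ∣ m := by
      rw [← Int.gcd_natCast_natCast, Int.gcd_dvd_iff]
      exact ⟨u, -w, by linear_combination -hm⟩
    refine ⟨Nat.dvd_antisymm hgcd_dvd (Nat.dvd_gcd hmN hmk), -u, ?_⟩
    linear_combination (k : ℤ) * hk + (m : ℤ) * hm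
  · rintro ⟨rfl, w, hw⟩
    obtain hgcd | hgcd := (N.gcd k).eq_zero_or_pos
    · obtain ⟨rfl, rfl⟩ := Nat.gcd_eq_zero_iff.1 hgcd
      simp
    obtain ⟨N', hN⟩ := N.gcd_dvd_left k
    obtain ⟨k', hk⟩ := N.gcd_dvd_right k
    generalize N.gcd k = m at *
    subst hN hk
    refine ⟨⟨k', N', ?_, ?_⟩, ⟨-w, -k', ?_, ?_⟩⟩
    · push_cast; ring
    · push_cast; ring
    · have hm : (m : ℤ) ≠ 0 := by positivity
      apply mul_left_cancel₀ hm
      push_cast at hw ⊢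
      linear_combination hw
    · push_cast; ring

namespace IsDihedralTriple

variable {H K : Type*} [Group H] [Group K] {m N k : ℕ} {t x y : H}

theorem map (h : IsDihedralTriple m N k t x y) (f : H →* K) :
    IsDihedralTriple m N k (f t) (f x) (f y) where
  t_sq := by rw [← map_pow, h.t_sq, map_one]
  x_pow := by rw [← map_pow, h.x_pow, map_one]
  y_pow := by rw [← map_pow, h.y_pow, map_pow]
  t_conj_x := by rw [← map_inv, ← map_mul, ← map_mul, h.t_conj_x, map_inv]
  t_conj_y := by rw [← map_inv, ← map_mul, ← map_mul, h.t_conj_y, map_inv]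
  commute := h.commute.map f

theorem zpow_mul_zpow_eq_one (h : IsDihedralTriple m N k t x y) {a b : ℤ}
    (hab : (a, b) ∈ relationLattice m N k) : x ^ a * y ^ b = 1 := by
  obtain ⟨u, v, rfl, rfl⟩ := mem_relationLattice.1 hab
  have hx : x ^ (u * N) = 1 := by rw [mul_comm, zpow_mul, zpow_natCast, h.x_pow, one_zpow]
  have hy : y ^ (v * m) = x ^ (v * k) := by
    rw [mul_comm v, zpow_mul, zpow_natCast, h.y_pow, ← zpow_natCast, ← zpow_mul, mul_comm]
  rw [hy, ← zpow_add, sub_add_cancel, hx]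

theorem neg_addRight {A : Type*} [AddCommGroup A] {a b : A} (ha : N • a = 0)
    (hb : m • b = k • a) :
    IsDihedralTriple m N k (Equiv.neg A) (Equiv.addRight a) (Equiv.addRight b) where
  t_sq := by ext; simp [sq]
  x_pow := by rw [Equiv.nsmul_addRight, ha, Equiv.addRight_zero]
  y_pow := by rw [Equiv.nsmul_addRight, Equiv.nsmul_addRight, hb]
  t_conj_x := by ext; simp [Equiv.Perm.inv_def, add_comm]
  t_conj_y := by ext; simp [Equiv.Perm.inv_def, add_comm]
  commute := by rw [commute_iff_eq, ← Equiv.addRight_add, ← Equiv.addRight_add, add_comm]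

end IsDihedralTriple

section Presentation

variable {H : Type*} [Group H] {m n ℓ : ℕ}

theorem forall_lift_rels_eq_one_iff {f : Gen → H} :
    (∀ r ∈ rels m n ℓ, FreeGroup.lift f r = 1) ↔
      IsDihedralTriple m (n / 2) ((ℓ + m) / 2) (f .t) (f .x) (f .y) := by
  simp only [rels, Set.mem_insert_iff, Set.mem_singleton_iff, forall_eq_or_imp, forall_eq,
    map_mul, map_inv, map_pow, FreeGroup.lift_apply_of]
  rw [mul_inv_eq_one, mul_eq_one_iff_eq_inv, mul_eq_one_iff_eq_inv, ← commutatorElement_def,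
    commutatorElement_eq_one_iff_commute]
  exact ⟨fun ⟨ht, hx, hy, htx, hty, hxy⟩ ↦ ⟨ht, hx, hy, htx, hty, hxy⟩,
    fun ⟨ht, hx, hy, htx, hty, hxy⟩ ↦ ⟨ht, hx, hy, htx, hty, hxy⟩⟩

theorem isDihedralTriple_gent_genx_geny (m n ℓ : ℕ) :
    IsDihedralTriple m (n / 2) ((ℓ + m) / 2) (gent m n ℓ) (genx m n ℓ) (geny m n ℓ) := by
  refine (forall_lift_rels_eq_one_iff (f := PresentedGroup.of)).1 fun r hr ↦ ?_
  have hlift : FreeGroup.lift PresentedGroup.of = PresentedGroup.mk (rels m n ℓ) := by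
    ext g
    exact FreeGroup.lift_apply_of
  rw [hlift]
  exact PresentedGroup.one_of_mem hr

variable {t x y : H}

/-- The homomorphism out of `G m n ℓ` given by its universal property. -/
def IsDihedralTriple.lift (h : IsDihedralTriple m (n / 2) ((ℓ + m) / 2) t x y) : G m n ℓ →* H :=
  PresentedGroup.toGroup (f := fun | .t => t | .x => x | .y => y) (forall_lift_rels_eq_one_iff.2 h)

namespace IsDihedralTriple

variable (h : IsDihedralTriple m (n / 2) ((ℓ + m) / 2) t x y)

@[simp]
theorem lift_gent : h.lift (gent m n ℓ) = t :=
  PresentedGroup.toGroup.of _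

@[simp]
theorem lift_genx : h.lift (genx m n ℓ) = x :=
  PresentedGroup.toGroup.of _

@[simp]
theorem lift_geny : h.lift (geny m n ℓ) = y :=
  PresentedGroup.toGroup.of _

end IsDihedralTriple

theorem G.hom_ext {f g : G m n ℓ →* H} (ht : f (gent m n ℓ) = g (gent m n ℓ))
    (hx : f (genx m n ℓ) = g (genx m n ℓ)) (hy : f (geny m n ℓ) = g (geny m n ℓ)) : f = g :=
  PresentedGroup.ext fun | .t => ht | .x => hx | .y => hy

theorem genx_zpow_mul_geny_zpow_eq_one_iff {a b : ℤ} :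
    genx m n ℓ ^ a * geny m n ℓ ^ b = 1 ↔
      (a, b) ∈ relationLattice m (n / 2) ((ℓ + m) / 2) := by
  refine ⟨fun h ↦ ?_, (isDihedralTriple_gent_genx_geny m n ℓ).zpow_mul_zpow_eq_one⟩
  set L := relationLattice m (n / 2) ((ℓ + m) / 2)
  let π : ℤ × ℤ →+ (ℤ × ℤ) ⧸ L := QuotientAddGroup.mk' L
  have hπ {p : ℤ × ℤ} : π p = 0 ↔ p ∈ L := QuotientAddGroup.eq_zero_iff p
  have hx : (n / 2) • π (1, 0) = 0 := by
    rw [← map_nsmul, hπ]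
    exact mem_relationLattice.2 ⟨1, 0, by simp, by simp⟩
  have hy : m • π (0, 1) = ((ℓ + m) / 2) • π (1, 0) := by
    rw [← map_nsmul, ← map_nsmul, ← sub_eq_zero, ← map_sub, hπ]
    exact mem_relationLattice.2 ⟨0, 1, by simp, by simp⟩
  have htranslation : Equiv.addRight (π (a, b)) = 1 := by
    have hrep := congrArg (IsDihedralTriple.neg_addRight hx hy).lift h
    rw [map_mul, map_zpow, map_zpow, IsDihedralTriple.lift_genx, IsDihedralTriple.lift_geny,
      map_one, Equiv.zsmul_addRight, Equiv.zsmul_addRight, ← Equiv.addRight_add,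
      ← map_zsmul, ← map_zsmul, ← map_add] at hrep
    simpa using hrep
  rw [← hπ]
  simpa using DFunLike.congr_fun htranslation 0

theorem exists_swap_mulAut_iff_isDihedralTriple :
    (∃ φ : MulAut (G m n ℓ),
        φ (gent m n ℓ) = gent m n ℓ ∧
        φ (gent m n ℓ * genx m n ℓ) = gent m n ℓ * geny m n ℓ ∧
        φ (gent m n ℓ * geny m n ℓ) = gent m n ℓ * genx m n ℓ) ↔
      IsDihedralTriple m (n / 2) ((ℓ + m) / 2) (gent m n ℓ) (geny m n ℓ) (genx m n ℓ) := by
  constructor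
  · rintro ⟨φ, ht, hx, hy⟩
    rw [map_mul, ht, mul_right_inj] at hx hy
    have hφ := (isDihedralTriple_gent_genx_geny m n ℓ).map φ.toMonoidHom
    simpa only [MulEquiv.toMonoidHom_eq_coe, MonoidHom.coe_coe, ht, hx, hy] using hφ
  · intro h
    have hinv : h.lift.comp h.lift = MonoidHom.id _ := G.hom_ext (by simp) (by simp) (by simp)
    exact ⟨h.lift.toMulEquiv h.lift hinv hinv, by simp, by simp, by simp⟩

theorem isDihedralTriple_gent_geny_genx_iff :
    IsDihedralTriple m (n / 2) ((ℓ + m) / 2) (gent m n ℓ) (geny m n ℓ) (genx m n ℓ) ↔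
      ∀ p ∈ relationLattice m (n / 2) ((ℓ + m) / 2),
        p.swap ∈ relationLattice m (n / 2) ((ℓ + m) / 2) := by
  have hG := isDihedralTriple_gent_genx_geny m n ℓ
  constructor
  · rintro h ⟨a, b⟩ hab
    rw [Prod.swap_prod_mk, ← genx_zpow_mul_geny_zpow_eq_one_iff,
      (hG.commute.zpow_zpow b a).eq]
    exact h.zpow_mul_zpow_eq_one hab
  · intro hswap
    rw [forall_swap_mem_relationLattice_iff_generators, ← genx_zpow_mul_geny_zpow_eq_one_iff,
      ← genx_zpow_mul_geny_zpow_eq_one_iff] at hswap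
    obtain ⟨hN, hk⟩ := hswap
    exact {
      t_sq := hG.t_sq
      x_pow := by simpa only [zpow_zero, one_mul, zpow_natCast] using hN
      y_pow := by simpa only [zpow_neg, mul_inv_eq_one, zpow_natCast] using hk
      t_conj_x := hG.t_conj_y
      t_conj_y := hG.t_conj_x
      commute := hG.commute.symm }

end Presentation

theorem statement7_general (m n ℓ : ℕ) (hne : Even n) (hpar : ℓ % 2 = m % 2) :
    (∃ φ : MulAut (G m n ℓ),
        φ (gent m n ℓ) = gent m n ℓ ∧
        φ (gent m n ℓ * genx m n ℓ) = gent m n ℓ * geny m n ℓ ∧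
        φ (gent m n ℓ * geny m n ℓ) = gent m n ℓ * genx m n ℓ) ↔
      (Int.gcd (n : ℤ) ((ℓ : ℤ) + m) = 2 * m ∧
        (2 * m * n : ℤ) ∣ ((ℓ : ℤ) ^ 2 + 2 * m * ℓ - 3 * m ^ 2)) := by
  obtain ⟨N, rfl⟩ : ∃ N, n = 2 * N := hne.exists_two_nsmul
  obtain ⟨k, hk⟩ : ∃ k, ℓ + m = 2 * k := ⟨(ℓ + m) / 2, by omega⟩
  rw [exists_swap_mulAut_iff_isDihedralTriple, isDihedralTriple_gent_geny_genx_iff,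
    forall_swap_mem_relationLattice_iff, hk, Nat.mul_div_cancel_left N two_pos,
    Nat.mul_div_cancel_left k two_pos]
  have hgcd : Int.gcd ((2 * N : ℕ) : ℤ) ((ℓ : ℤ) + m) = 2 * N.gcd k := by
    rw [← Nat.cast_add, hk, Int.gcd_natCast_natCast, Nat.gcd_mul_left]
  have hquad : (ℓ : ℤ) ^ 2 + 2 * m * ℓ - 3 * m ^ 2 = 4 * ((k : ℤ) ^ 2 - m ^ 2) := by
    have hℓ : (ℓ : ℤ) = 2 * k - m := by omega
    rw [hℓ]
    ring
  have hmod : (2 * m * (2 * N : ℕ) : ℤ) = 4 * (m * N) := by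
    push_cast
    ring
  rw [hgcd, hquad, hmod, mul_dvd_mul_iff_left four_ne_zero, mul_right_inj' two_ne_zero]

/-- **Lemma 4.1.** There exists an automorphism of `G` fixing `t` and interchanging
`tx` with `ty` iff `gcd(n,ℓ+m) = 2m` and `2mn ∣ ℓ² + 2mℓ - 3m²`. -/
theorem statement7 (m n ℓ : ℕ) (hm : 0 < m) (hn : 4 ≤ n) (hne : Even n)
    (hl : ℓ ≤ n - 1) (hpar : ℓ % 2 = m % 2) :
    (∃ φ : MulAut (G m n ℓ),
        φ (gent m n ℓ) = gent m n ℓ ∧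
        φ (gent m n ℓ * genx m n ℓ) = gent m n ℓ * geny m n ℓ ∧
        φ (gent m n ℓ * geny m n ℓ) = gent m n ℓ * genx m n ℓ) ↔
      (Int.gcd (n : ℤ) ((ℓ : ℤ) + m) = 2 * m ∧
        (2 * m * n : ℤ) ∣ ((ℓ : ℤ) ^ 2 + 2 * m * ℓ - 3 * m ^ 2)) :=
  statement7_general m n ℓ hne hpar

end HTGPaper
end

section
/- Let m and n be positive integers with n ≥ 4 even, let 0 ≤ ℓ ≤ n−1 be an integer of the same parity as m, and let G = ⟨t, x, y | t² = 1, x^{n/2} = 1, y^m = x^{(ℓ+m)/2}, txt = x⁻¹, tyt = y⁻¹, xy = yx⟩. Then there exists an automorphism of G fixing ty and interchanging t with tx if and only if ℓ ∈ {0, n/2}. -/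
namespace HTGPaper

/-!
A homomorphism `f` fixes `ty` and interchanges `t` with `tx` exactly when it sends `(t, x, y)` to
`(tx, x⁻¹, x⁻¹y)`, a substitution that is its own inverse. So the automorphism exists if and only if
the substituted triple satisfies the defining relations. All of them are automatic except
`(x⁻¹y)^m = x^{-(ℓ+m)/2}`, which amounts to `x^ℓ = 1` because `y^m = x^{(ℓ+m)/2}`. Finally `x` has
order exactly `n/2`: the rotations `ρ^m` and `ρ^{(ℓ+m)/2}` and a reflection in the dihedral group
with rotation `ρ` of order `(n/2)m` satisfy the relations.
-/

theorem dvd_two_mul_iff_of_lt {n l : ℕ} (hl : l < n) : n ∣ 2 * l ↔ l = 0 ∨ 2 * l = n := by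
  constructor
  · intro hdvd
    by_cases hl0 : l = 0
    · exact .inl hl0
    · exact .inr (Nat.eq_of_dvd_of_lt_two_mul (by omega) hdvd (by omega))
  · rintro (rfl | rfl) <;> simp

section GroupLemmas

variable {H : Type*} [Group H]

theorem mul_mul_inv_mul_eq_one_iff_semiconjBy {a b : H} :
    a * b * a⁻¹ * b = 1 ↔ SemiconjBy a b b⁻¹ := by
  rw [mul_eq_one_iff_eq_inv, mul_inv_eq_iff_eq_mul, SemiconjBy]

theorem inv_mul_pow_eq_inv_pow_iff {a b : H} (hab : Commute a b) {m k l : ℕ}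
    (hb : b ^ m = a ^ k) (hk : 2 * k = l + m) :
    (a⁻¹ * b) ^ m = a⁻¹ ^ k ↔ a ^ l = 1 :=
  calc
    (a⁻¹ * b) ^ m = a⁻¹ ^ k ↔ (a ^ m)⁻¹ * a ^ k = (a ^ k)⁻¹ := by
      rw [hab.inv_left.mul_pow, hb, inv_pow, inv_pow]
    _ ↔ a ^ m = a ^ (l + m) := by
      rw [eq_inv_iff_mul_eq_one, mul_assoc, ← pow_add, ← two_mul, hk, inv_mul_eq_one]
    _ ↔ a ^ l = 1 := by
      rw [pow_add, right_eq_mul]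

theorem map_mul_fixed_and_swap_iff {F : Type*} [FunLike F H H] [MonoidHomClass F H H] (f : F)
    (t x y : H) :
    (f (t * y) = t * y ∧ f t = t * x ∧ f (t * x) = t) ↔
      (f t = t * x ∧ f x = x⁻¹ ∧ f y = x⁻¹ * y) := by
  constructor
  · rintro ⟨hty, ht, htx⟩
    rw [map_mul, ht, mul_assoc] at hty htx
    exact ⟨ht, eq_inv_of_mul_eq_one_right (mul_eq_left.mp htx),
      eq_inv_mul_of_mul_eq (mul_left_cancel hty)⟩
  · rintro ⟨ht, hx, hy⟩
    simp [ht, hx, hy, mul_assoc]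

end GroupLemmas

/-- The elements `t`, `x`, `y` of a group satisfy the defining relations of `G m n ℓ`. The relations
`txt⁻¹ = x⁻¹`, `tyt⁻¹ = y⁻¹` and `xy = yx` are encoded by `SemiconjBy` and `Commute`. -/
structure SatisfiesRels {H : Type*} [Group H] (m n ℓ : ℕ) (t x y : H) : Prop where
  t_sq : t ^ 2 = 1
  x_pow : x ^ (n / 2) = 1
  y_pow : y ^ m = x ^ ((ℓ + m) / 2)
  semiconj_x : SemiconjBy t x x⁻¹
  semiconj_y : SemiconjBy t y y⁻¹
  commute : Commute x y

section Presentation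

variable {m n ℓ : ℕ}

theorem forall_rels_lift_eq_one_iff {H : Type*} [Group H] {v : Gen → H} :
    (∀ r ∈ rels m n ℓ, FreeGroup.lift v r = 1) ↔
      SatisfiesRels m n ℓ (v .t) (v .x) (v .y) := by
  simp only [rels, Set.mem_insert_iff, Set.mem_singleton_iff, forall_eq_or_imp, forall_eq, map_mul,
    map_pow, map_inv, FreeGroup.lift_apply_of, mul_mul_inv_mul_eq_one_iff_semiconjBy,
    ← commutatorElement_def, map_commutatorElement, commutatorElement_eq_one_iff_commute,
    mul_inv_eq_one]
  exact ⟨fun ⟨ht, hx, hy, htx, hty, hxy⟩ => ⟨ht, hx, hy, htx, hty, hxy⟩,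
    fun ⟨ht, hx, hy, htx, hty, hxy⟩ => ⟨ht, hx, hy, htx, hty, hxy⟩⟩

theorem satisfiesRels_generators :
    SatisfiesRels m n ℓ (gent m n ℓ) (genx m n ℓ) (geny m n ℓ) := by
  refine forall_rels_lift_eq_one_iff (v := PresentedGroup.of).mp fun r hr => ?_
  have lift_of : FreeGroup.lift PresentedGroup.of = PresentedGroup.mk (rels m n ℓ) :=
    FreeGroup.ext_hom _ _ fun _ => FreeGroup.lift_apply_of
  rw [lift_of, PresentedGroup.one_of_mem hr]

theorem monoidHom_ext {H : Type*} [Group H] {f g : G m n ℓ →* H}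
    (ht : f (gent m n ℓ) = g (gent m n ℓ)) (hx : f (genx m n ℓ) = g (genx m n ℓ))
    (hy : f (geny m n ℓ) = g (geny m n ℓ)) : f = g :=
  PresentedGroup.ext <| by rintro (_ | _ | _) <;> assumption

namespace SatisfiesRels

variable {H K : Type*} [Group H] [Group K] {t x y : H}

theorem map (h : SatisfiesRels m n ℓ t x y) (f : H →* K) :
    SatisfiesRels m n ℓ (f t) (f x) (f y) where
  t_sq := by rw [← map_pow, h.t_sq, map_one]
  x_pow := by rw [← map_pow, h.x_pow, map_one]
  y_pow := by rw [← map_pow, h.y_pow, map_pow]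
  semiconj_x := by simpa only [map_inv] using h.semiconj_x.map f
  semiconj_y := by simpa only [map_inv] using h.semiconj_y.map f
  commute := h.commute.map f

/-- The homomorphism out of `G m n ℓ` given by the universal property of the presentation. -/
def lift (h : SatisfiesRels m n ℓ t x y) : G m n ℓ →* H :=
  PresentedGroup.toGroup (f := fun | .t => t | .x => x | .y => y)
    (forall_rels_lift_eq_one_iff.mpr h)

theorem lift_gent (h : SatisfiesRels m n ℓ t x y) : h.lift (gent m n ℓ) = t :=
  PresentedGroup.toGroup.of _

theorem lift_genx (h : SatisfiesRels m n ℓ t x y) : h.lift (genx m n ℓ) = x :=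
  PresentedGroup.toGroup.of _

theorem lift_geny (h : SatisfiesRels m n ℓ t x y) : h.lift (geny m n ℓ) = y :=
  PresentedGroup.toGroup.of _

theorem swap_iff (h : SatisfiesRels m n ℓ t x y) (hpar : ℓ % 2 = m % 2) :
    SatisfiesRels m n ℓ (t * x) x⁻¹ (x⁻¹ * y) ↔ x ^ ℓ = 1 := by
  have y_pow_iff : (x⁻¹ * y) ^ m = x⁻¹ ^ ((ℓ + m) / 2) ↔ x ^ ℓ = 1 :=
    inv_mul_pow_eq_inv_pow_iff h.commute h.y_pow (by omega)
  have semiconj_x : SemiconjBy (t * x) x x⁻¹ := h.semiconj_x.mul_left (Commute.refl x)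
  have semiconj_y : SemiconjBy (t * x) y y⁻¹ := h.semiconj_y.mul_left h.commute
  constructor
  · exact fun hswap => y_pow_iff.mp hswap.y_pow
  · intro hx
    constructor
    case t_sq =>
      calc
        (t * x) ^ 2 = x⁻¹ * t * (t * x) := by rw [sq, ← h.semiconj_x.eq]
        _ = 1 := by rw [mul_assoc, ← mul_assoc t, ← sq, h.t_sq, one_mul, inv_mul_cancel]
    case x_pow => rw [inv_pow, h.x_pow, inv_one]
    case y_pow => exact y_pow_iff.mpr hx
    case semiconj_x => exact semiconj_x.inv_right
    case semiconj_y =>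
      rw [h.commute.inv_left.mul_inv]
      exact semiconj_x.inv_right.mul_right semiconj_y
    case commute => exact (Commute.refl _).mul_right h.commute.inv_left

theorem lift_comp_lift_of_swap
    (h : SatisfiesRels m n ℓ (gent m n ℓ * genx m n ℓ) (genx m n ℓ)⁻¹
      ((genx m n ℓ)⁻¹ * geny m n ℓ)) :
    h.lift.comp h.lift = MonoidHom.id (G m n ℓ) :=
  monoidHom_ext (by simp [lift_gent, lift_genx]) (by simp [lift_genx])
    (by simp [lift_genx, lift_geny])

end SatisfiesRels

theorem satisfiesRels_dihedralGroup (m n ℓ : ℕ) :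
    SatisfiesRels m n ℓ (DihedralGroup.sr 0 : DihedralGroup (n / 2 * m)) (DihedralGroup.r 1 ^ m)
      (DihedralGroup.r 1 ^ ((ℓ + m) / 2)) where
  t_sq := by rw [sq, DihedralGroup.sr_mul_self]
  x_pow := by rw [← pow_mul, mul_comm, DihedralGroup.r_one_pow_n]
  y_pow := pow_right_comm _ _ _
  semiconj_x := by simp [SemiconjBy]
  semiconj_y := by simp [SemiconjBy]
  commute := Commute.pow_pow_self _ _ _

theorem orderOf_genx (n ℓ : ℕ) (hm : 0 < m) : orderOf (genx m n ℓ) = n / 2 := by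
  apply Nat.dvd_antisymm (orderOf_dvd_of_pow_eq_one satisfiesRels_generators.x_pow)
  have orderOf_rotation :
      orderOf ((DihedralGroup.r 1 : DihedralGroup (n / 2 * m)) ^ m) = n / 2 := by
    rw [orderOf_pow_of_dvd hm.ne' (by simp), DihedralGroup.orderOf_r_one,
      Nat.mul_div_cancel _ hm]
  rw [← orderOf_rotation, ← (satisfiesRels_dihedralGroup m n ℓ).lift_genx]
  exact orderOf_map_dvd _ _

theorem exists_swap_mulAut_iff_satisfiesRels :
    (∃ φ : MulAut (G m n ℓ), φ (gent m n ℓ) = gent m n ℓ * genx m n ℓ ∧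
        φ (genx m n ℓ) = (genx m n ℓ)⁻¹ ∧ φ (geny m n ℓ) = (genx m n ℓ)⁻¹ * geny m n ℓ) ↔
      SatisfiesRels m n ℓ (gent m n ℓ * genx m n ℓ) (genx m n ℓ)⁻¹
        ((genx m n ℓ)⁻¹ * geny m n ℓ) := by
  constructor
  · rintro ⟨φ, ht, hx, hy⟩
    rw [← hy, ← hx, ← ht]
    exact satisfiesRels_generators.map φ.toMonoidHom
  · intro h
    have lift_involutive := h.lift_comp_lift_of_swap
    exact ⟨h.lift.toMulEquiv h.lift lift_involutive lift_involutive,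
      h.lift_gent, h.lift_genx, h.lift_geny⟩

end Presentation

theorem statement9_general (m n ℓ : ℕ) (hm : 0 < m) (hne : Even n) (hpar : ℓ % 2 = m % 2) :
    (∃ φ : MulAut (G m n ℓ),
        φ (gent m n ℓ * geny m n ℓ) = gent m n ℓ * geny m n ℓ ∧
        φ (gent m n ℓ) = gent m n ℓ * genx m n ℓ ∧
        φ (gent m n ℓ * genx m n ℓ) = gent m n ℓ) ↔
      n ∣ 2 * ℓ := by
  have half_dvd_iff : n / 2 ∣ ℓ ↔ n ∣ 2 * ℓ := by
    rw [← Nat.mul_dvd_mul_iff_left two_pos, Nat.two_mul_div_two_of_even hne]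
  simp only [map_mul_fixed_and_swap_iff]
  rw [exists_swap_mulAut_iff_satisfiesRels, satisfiesRels_generators.swap_iff hpar,
    ← orderOf_dvd_iff_pow_eq_one, orderOf_genx n ℓ hm, half_dvd_iff]

/-- **Lemma 4.3.** There exists an automorphism of `G` fixing `ty` and interchanging
`t` with `tx` iff `ℓ ∈ {0, n/2}`. -/
theorem statement9 (m n ℓ : ℕ) (hm : 0 < m) (hn : 4 ≤ n) (hne : Even n)
    (hl : ℓ ≤ n - 1) (hpar : ℓ % 2 = m % 2) :
    (∃ φ : MulAut (G m n ℓ),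
        φ (gent m n ℓ * geny m n ℓ) = gent m n ℓ * geny m n ℓ ∧
        φ (gent m n ℓ) = gent m n ℓ * genx m n ℓ ∧
        φ (gent m n ℓ * genx m n ℓ) = gent m n ℓ) ↔
      (ℓ = 0 ∨ 2 * ℓ = n) :=
  (statement9_general m n ℓ hm hne hpar).trans (dvd_two_mul_iff_of_lt (by omega))

end HTGPaper
end
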